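/- Let S be a real symmetric d×d matrix of full rank with exactly m positive eigenvalues and ν a Borel probability measure on ℝ^d with finite second moment. The problem of maximizing ½∫S(x,x) dμ over all μ ∈ P₂(ℝ^d) dominated by ν in the convex order has a solution. Moreover, if μ ≺_conv ν, G is a maximal S-monotone set, and γ ∈ Γ(ν) has x-marginal μ, then: (i) μ solves this problem if and only if γ is an optimal plan for the primal problem; (ii) μ solves this problem and G is an optimal set for the dual problem if and only if ∫ψ_G(y) dν = ½∫S(x,x) dμ, and in that case supp(μ) ⊆ G. -/

import Mathlib

/-!
Write `q(x) = S(x,x)/2` and `ℓ_x(y) = S(x,y) - q(x) = q(y) - q(y - x)`, so that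
`ψ_G = sup_{x ∈ G} ℓ_x`.

*Weak duality* (`weak_duality`). If `G` is maximal monotone, then `q ≤ ψ_G`, with equality only on
`G`. Since `ψ_G` is an increasing limit of finite convex functions, `μ ≺_conv ν` gives
`∫ q dμ ≤ ∫ ψ_G dμ ≤ ∫ ψ_G dν`, and equality of the extremes forces `ψ_G = q` `μ`-a.e., that is
`μ(G) = 1`, whence `supp μ ⊆ G` because `G` is closed.

*Couplings*. For `γ ∈ Γ(ν)` the `x`-marginal is dominated by `ν` by conditional Jensen
(`convFeasible_of_MGamma`), and `½∫S(x,y) dγ = ½∫S(x,x) dγ = ∫ ℓ_x(y) dγ` by the martingale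
property (`primalVal_eq`, `integral_ell_of_MGamma`).

*Strong duality* (`strong_duality`) provides `γ ∈ Γ(ν)` and a maximal monotone `G` with
`∫ ψ_G dν ≤ ½∫S(x,y) dγ`; with the two previous points this makes the `x`-marginal of `γ` optimal
and yields all the equivalences. The coupling comes from Hahn–Banach applied to
`f ↦ inf {∫ φ dν | f(x,y) ≤ φ(y) + ⟨v(x), y - x⟩}` and from the Riesz representation theorem on
functions of quadratic growth (`exists_plan`), together with almost optimal certificates `(φ, v)`
for `f(x,y) = ℓ_x(y)`. Such a certificate can be replaced by the convex function
`sup_x (ℓ_x(y) - ⟨v(x), y - x⟩)`, which lies between `q` and `φ`. Every convex majorant of `q`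
dominates `ψ_G` for a monotone set `G` that meets every fibre over the positive coordinates of `S`
(`exists_mono_le`): take a minimal convex majorant `ψ` of `q`, and find in every fibre a point `x`
with `ℓ_x ≤ ψ` by separating, with an affine function, the convex `ψ` from the concave function
obtained by restricting `q` to one value of the positive coordinates. Monotone sets which meet all
the fibres are maximal (`maxSMono_of_fibre`), and a diagonal argument with Fatou's lemma turns the
almost optimal sets into an optimal one (`exists_limit_set`).
-/


open MeasureTheory Filter Set Matrix

noncomputable section

/-- The bilinear form of the matrix `S`: `S(x,y) = ⟨x, Sy⟩`. -/
def Sb {d : ℕ} (S : Matrix (Fin d) (Fin d) ℝ) (x y : Fin d → ℝ) : ℝ :=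
  x ⬝ᵥ S.mulVec y

/-- A set `G` is `S`-monotone if `S(x-y,x-y) ≥ 0` for all `x, y ∈ G`. -/
def SMono {d : ℕ} (S : Matrix (Fin d) (Fin d) ℝ) (G : Set (Fin d → ℝ)) : Prop :=
  ∀ x ∈ G, ∀ y ∈ G, 0 ≤ Sb S (x - y) (x - y)

/-- Maximal `S`-monotone set. -/
def MaxSMono {d : ℕ} (S : Matrix (Fin d) (Fin d) ℝ) (G : Set (Fin d → ℝ)) : Prop :=
  SMono S G ∧ ∀ H, SMono S H → G ⊆ H → H = G

/-- The Fitzpatrick function `ψ_G(y) = sup_{x∈G} (S(x,y) - S(x,x)/2)`, with values in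
`ℝ ∪ {+∞}` (modeled in `EReal`). -/
def fitz {d : ℕ} (S : Matrix (Fin d) (Fin d) ℝ) (G : Set (Fin d → ℝ))
    (y : Fin d → ℝ) : EReal :=
  ⨆ x ∈ G, ((Sb S x y - Sb S x x / 2 : ℝ) : EReal)

/-- Positive part of an extended real number, in `ℝ≥0∞`. -/
def epos (x : EReal) : ENNReal := if x = ⊤ then ⊤ else ENNReal.ofReal x.toReal

/-- Integral of an `EReal`-valued function: positive part minus negative part. -/
def eInt {α : Type*} [MeasurableSpace α] (μ : Measure α) (f : α → EReal) : EReal :=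
  ((∫⁻ a, epos (f a) ∂μ : ENNReal) : EReal) - ((∫⁻ a, epos (-(f a)) ∂μ : ENNReal) : EReal)

/-- The martingale property of a measure `γ(dx,dy)` on `ℝ^d × ℝ^d`: the conditional
expectation of `y` given `x` equals `x`, `γ`-a.s. -/
def MartProp {d : ℕ} (γ : Measure ((Fin d → ℝ) × (Fin d → ℝ))) : Prop :=
  γ[(fun p => p.2) | MeasurableSpace.comap Prod.fst inferInstance] =ᵐ[γ] fun p => p.1

/-- `γ ∈ Γ(ν)`: probability measures on `ℝ^d × ℝ^d` with finite second moment,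
`y`-marginal `ν` and the martingale property. -/
def MGamma {d : ℕ} (ν : Measure (Fin d → ℝ))
    (γ : Measure ((Fin d → ℝ) × (Fin d → ℝ))) : Prop :=
  IsProbabilityMeasure γ ∧ γ.map Prod.snd = ν ∧
    Integrable (fun p => ‖p.1‖ ^ 2 + ‖p.2‖ ^ 2) γ ∧ MartProp γ

/-- Value of the primal problem: `(1/2) ∫ S(x,y) dγ`. -/
def primalVal {d : ℕ} (S : Matrix (Fin d) (Fin d) ℝ)
    (γ : Measure ((Fin d → ℝ) × (Fin d → ℝ))) : ℝ :=
  (1 / 2) * ∫ p, Sb S p.1 p.2 ∂γ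

/-- `γ` is an optimal plan for the primal problem. -/
def PrimalOpt {d : ℕ} (S : Matrix (Fin d) (Fin d) ℝ) (ν : Measure (Fin d → ℝ))
    (γ : Measure ((Fin d → ℝ) × (Fin d → ℝ))) : Prop :=
  MGamma ν γ ∧ ∀ γ', MGamma ν γ' → primalVal S γ' ≤ primalVal S γ

/-- `G` is an optimal set for the dual problem: minimize `∫ ψ_G dν` over maximal
`S`-monotone sets. -/
def DualOpt {d : ℕ} (S : Matrix (Fin d) (Fin d) ℝ) (ν : Measure (Fin d → ℝ))
    (G : Set (Fin d → ℝ)) : Prop :=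
  MaxSMono S G ∧ ∀ H, MaxSMono S H → eInt ν (fitz S G) ≤ eInt ν (fitz S H)

/-- The support of a measure: points all of whose neighborhoods have positive measure. -/
def msupp {α : Type*} [TopologicalSpace α] [MeasurableSpace α] (μ : Measure α) : Set α :=
  {x | ∀ U ∈ nhds x, μ U ≠ 0}

/-- The `S`-projection on `G`: minimizers over `G` of `z ↦ S(z-y,z-y)`. -/
def SProj {d : ℕ} (S : Matrix (Fin d) (Fin d) ℝ) (G : Set (Fin d → ℝ))
    (y : Fin d → ℝ) : Set (Fin d → ℝ) :=
  {x ∈ G | ∀ z ∈ G, Sb S (x - y) (x - y) ≤ Sb S (z - y) (z - y)}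

/-- The inverse image of the projection: `P_G^{-1}(x) = {y : x ∈ P_G(y)}`. -/
def SProjInv {d : ℕ} (S : Matrix (Fin d) (Fin d) ℝ) (G : Set (Fin d → ℝ))
    (x : Fin d → ℝ) : Set (Fin d → ℝ) :=
  {y | x ∈ SProj S G y}

/-- `Q_G(x) = ∪_{n ≥ 1} Q_G^{1/n}(x)`, where
`Q_G^ε(x) = {y ∈ P_G^{-1}(x) : x + ε (x - y) ∈ P_G^{-1}(x)}`. -/
def QG {d : ℕ} (S : Matrix (Fin d) (Fin d) ℝ) (G : Set (Fin d → ℝ))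
    (x : Fin d → ℝ) : Set (Fin d → ℝ) :=
  ⋃ n : ℕ, {y ∈ SProjInv S G x |
    x + ((1 : ℝ) / (n + 1)) • (x - y) ∈ SProjInv S G x}


/-- Domination in the convex order: `μ(f) ≤ ν(f)` for every nonnegative convex `f`. -/
def ConvOrder {d : ℕ} (μ ν : Measure (Fin d → ℝ)) : Prop :=
  ∀ f : (Fin d → ℝ) → ℝ, ConvexOn ℝ Set.univ f → (∀ x, 0 ≤ f x) →
    ∫⁻ x, ENNReal.ofReal (f x) ∂μ ≤ ∫⁻ x, ENNReal.ofReal (f x) ∂ν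

/-- Feasibility for the relaxed problem: `μ ∈ P₂(ℝ^d)` with `μ ≺_conv ν`. -/
def ConvFeasible {d : ℕ} (ν μ : Measure (Fin d → ℝ)) : Prop :=
  IsProbabilityMeasure μ ∧ Integrable (fun x => ‖x‖ ^ 2) μ ∧ ConvOrder μ ν

/-- Value of the relaxed problem: `(1/2) ∫ S(x,x) dμ`. -/
def relaxedVal {d : ℕ} (S : Matrix (Fin d) (Fin d) ℝ)
    (μ : Measure (Fin d → ℝ)) : ℝ :=
  (1 / 2) * ∫ x, Sb S x x ∂μ

/-- `μ` maximizes `(1/2) ∫ S(x,x) dμ` over measures dominated by `ν` in the convex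
order. -/
def RelaxedOpt {d : ℕ} (S : Matrix (Fin d) (Fin d) ℝ)
    (ν μ : Measure (Fin d → ℝ)) : Prop :=
  ConvFeasible ν μ ∧ ∀ μ', ConvFeasible ν μ' → relaxedVal S μ' ≤ relaxedVal S μ

/-! ### The quadratic form and its diagonalization -/

section Algebra

variable {d : ℕ} {S : Matrix (Fin d) (Fin d) ℝ}

lemma Sb_add_left (x y z : Fin d → ℝ) : Sb S (x + y) z = Sb S x z + Sb S y z := by
  simp [Sb, add_dotProduct]

lemma Sb_add_right (x y z : Fin d → ℝ) : Sb S x (y + z) = Sb S x y + Sb S x z := by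
  simp [Sb, mulVec_add, dotProduct_add]

lemma Sb_smul_left (c : ℝ) (x y : Fin d → ℝ) : Sb S (c • x) y = c * Sb S x y := by
  simp [Sb]

lemma Sb_smul_right (c : ℝ) (x y : Fin d → ℝ) : Sb S x (c • y) = c * Sb S x y := by
  simp [Sb, mulVec_smul]

lemma Sb_neg_left (x y : Fin d → ℝ) : Sb S (-x) y = -Sb S x y := by
  simp [Sb]

lemma Sb_neg_right (x y : Fin d → ℝ) : Sb S x (-y) = -Sb S x y := by
  simp [Sb, mulVec_neg]

lemma Sb_sub_left (x y z : Fin d → ℝ) : Sb S (x - y) z = Sb S x z - Sb S y z := by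
  simp [Sb, sub_dotProduct]

lemma Sb_sub_right (x y z : Fin d → ℝ) : Sb S x (y - z) = Sb S x y - Sb S x z := by
  simp [Sb, mulVec_sub, dotProduct_sub]

lemma Sb_comm (hS : S.IsHermitian) (x y : Fin d → ℝ) : Sb S x y = Sb S y x := by
  have h : Sᵀ = S := by
    rw [← conjTranspose_eq_transpose_of_trivial]; exact hS
  unfold Sb
  rw [dotProduct_mulVec, ← mulVec_transpose, h, dotProduct_comm]

/-- The quadratic form `q(x) = S(x,x)/2`. -/
def qf (S : Matrix (Fin d) (Fin d) ℝ) (x : Fin d → ℝ) : ℝ := Sb S x x / 2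

/-- The affine function `ℓ_x(y) = S(x,y) - S(x,x)/2`, tangent to `q` at `x`; the Fitzpatrick
function of `G` is the supremum of the `ℓ_x` with `x ∈ G`. -/
def ell (S : Matrix (Fin d) (Fin d) ℝ) (x y : Fin d → ℝ) : ℝ := Sb S x y - Sb S x x / 2

lemma ell_eq (hS : S.IsHermitian) (x y : Fin d → ℝ) : ell S x y = qf S y - qf S (y - x) := by
  simp only [ell, qf, Sb_sub_left, Sb_sub_right, Sb_comm hS y x]
  ring

lemma continuous_Sb : Continuous fun p : (Fin d → ℝ) × (Fin d → ℝ) => Sb S p.1 p.2 := by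
  unfold Sb dotProduct mulVec dotProduct
  fun_prop

lemma continuous_qf : Continuous (qf S) := by
  unfold qf
  exact (continuous_Sb.comp (continuous_id.prodMk continuous_id)).div_const _

lemma continuous_ell : Continuous fun p : (Fin d → ℝ) × (Fin d → ℝ) => ell S p.1 p.2 := by
  unfold ell
  exact continuous_Sb.sub ((continuous_Sb.comp (continuous_fst.prodMk continuous_fst)).div_const _)

/-- Sylvester's law of inertia in the form used here: linear coordinates `T` in which the
nondegenerate form `S` is diagonal with entries `±1`. -/
lemma exists_diag (hS : S.IsHermitian) (hrank : IsUnit S.det) :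
    ∃ (T : (Fin d → ℝ) ≃L[ℝ] (Fin d → ℝ)) (ε : Fin d → ℝ), (∀ i, ε i = 1 ∨ ε i = -1) ∧
      ∀ x y, Sb S x y = ∑ i, ε i * (T x i * T y i) := by
  set lam := hS.eigenvalues with hlam
  set U : Matrix (Fin d) (Fin d) ℝ := (hS.eigenvectorUnitary : Matrix (Fin d) (Fin d) ℝ) with hU
  have hspec : S = U * diagonal lam * Uᵀ := by
    have h := hS.spectral_theorem
    rw [Unitary.conjStarAlgAut_apply] at h
    simpa [star_eq_conjTranspose, conjTranspose_eq_transpose_of_trivial] using h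
  have hU1 : U * Uᵀ = 1 := by
    have := (Unitary.mem_iff.1 hS.eigenvectorUnitary.2).2
    simpa [star_eq_conjTranspose, conjTranspose_eq_transpose_of_trivial] using this
  have hU2 : Uᵀ * U = 1 := mul_eq_one_comm.1 hU1
  have hne : ∀ i, lam i ≠ 0 := by
    intro i hi
    have : S.det = 0 := by
      rw [hS.det_eq_prod_eigenvalues]
      exact Finset.prod_eq_zero (Finset.mem_univ i) (by simpa using hi)
    simp [this] at hrank
  have hs : ∀ i, 0 < Real.sqrt |lam i| := fun i => Real.sqrt_pos.2 (abs_pos.2 (hne i))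
  set r : Fin d → ℝ := fun i => Real.sqrt |lam i| with hr
  let M : Matrix (Fin d) (Fin d) ℝ := diagonal r * Uᵀ
  let M' : Matrix (Fin d) (Fin d) ℝ := U * diagonal (fun i => (r i)⁻¹)
  have hMM' : M * M' = 1 := by
    have : M * M' = diagonal r * (Uᵀ * U) * diagonal (fun i => (r i)⁻¹) := by
      simp only [M, M', Matrix.mul_assoc]
    rw [this, hU2, Matrix.mul_one, diagonal_mul_diagonal, ← diagonal_one]
    congr 1
    funext i
    exact mul_inv_cancel₀ (hs i).ne'
  have hM'M : M' * M = 1 := mul_eq_one_comm.1 hMM'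
  let T : (Fin d → ℝ) ≃ₗ[ℝ] (Fin d → ℝ) := Matrix.toLin'OfInv hM'M hMM'
  refine ⟨T.symm.symm.toContinuousLinearEquiv, fun i => SignType.sign (lam i), ?_, ?_⟩
  · intro i
    rcases lt_or_gt_of_ne (hne i) with h | h
    · right; simp [sign_neg h]
    · left; simp [sign_pos h]
  · intro x y
    have hT : ∀ x i, T x i = r i * (Uᵀ *ᵥ x) i := by
      intro x i
      change (M *ᵥ x) i = _
      simp only [M]
      rw [← mulVec_mulVec, mulVec_diagonal]
    have h1 : Sb S x y = ∑ i, lam i * ((Uᵀ *ᵥ x) i * (Uᵀ *ᵥ y) i) := by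
      unfold Sb
      conv_lhs => rw [hspec]
      rw [← mulVec_mulVec, ← mulVec_mulVec, dotProduct_mulVec, ← mulVec_transpose, dotProduct]
      refine Finset.sum_congr rfl fun i _ => ?_
      rw [mulVec_diagonal]
      ring
    rw [h1]
    refine Finset.sum_congr rfl fun i _ => ?_
    change _ = _ * (T x i * T y i)
    rw [hT, hT]
    have h2 : r i * r i = |lam i| := Real.mul_self_sqrt (abs_nonneg _)
    have h3 : ((SignType.sign (lam i) : SignType) : ℝ) * |lam i| = lam i := sign_mul_abs _
    calc lam i * ((Uᵀ *ᵥ x) i * (Uᵀ *ᵥ y) i)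
        = ((SignType.sign (lam i) : SignType) : ℝ) * (r i * r i)
          * ((Uᵀ *ᵥ x) i * (Uᵀ *ᵥ y) i) := by rw [h2, h3]
      _ = _ := by ring

end Algebra

/-! ### Minimal convex majorants and monotone sets -/

section Convex

lemma convexOn_sInf {V : Type*} [AddCommGroup V] [Module ℝ V] {C : Set (V × ℝ)}
    (hC : Convex ℝ C) (hne : ∀ z, {r | (z, r) ∈ C}.Nonempty)
    (hbdd : ∀ z, BddBelow {r | (z, r) ∈ C}) :
    ConvexOn ℝ univ fun z => sInf {r | (z, r) ∈ C} := by
  refine ⟨convex_univ, fun x _ y _ a b ha hb hab => ?_⟩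
  refine le_of_forall_pos_le_add fun δ hδ => ?_
  obtain ⟨r, hr, hr'⟩ := exists_lt_of_csInf_lt (hne x) (lt_add_of_pos_right _ hδ)
  obtain ⟨s, hs, hs'⟩ := exists_lt_of_csInf_lt (hne y) (lt_add_of_pos_right _ hδ)
  have hmem : (a • x + b • y, a * r + b * s) ∈ C := hC hr hs ha hb hab
  refine (csInf_le (hbdd _) hmem).trans ?_
  simp only [smul_eq_mul]
  have h1 := mul_le_mul_of_nonneg_left hr'.le ha
  have h2 := mul_le_mul_of_nonneg_left hs'.le hb
  have h3 : a * δ + b * δ = δ := by rw [← add_mul, hab, one_mul]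
  linarith

/-- Below any convex majorant of `q` there is a minimal convex majorant of `q`. -/
lemma exists_minimal_convex {V : Type*} [AddCommGroup V] [Module ℝ V] (q φ : V → ℝ)
    (hφ : ConvexOn ℝ univ φ) (hq : q ≤ φ) :
    ∃ ψ : V → ℝ, ConvexOn ℝ univ ψ ∧ q ≤ ψ ∧ ψ ≤ φ ∧
      ∀ ψ' : V → ℝ, ConvexOn ℝ univ ψ' → q ≤ ψ' → ψ' ≤ ψ → ψ ≤ ψ' := by
  have hchain : ∀ c ⊆ {ψ : (V → ℝ)ᵒᵈ | ConvexOn ℝ univ (ψ : V → ℝ) ∧ q ≤ (ψ : V → ℝ)},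
      IsChain (· ≤ ·) c → ∀ y ∈ c, ∃ ub ∈ {ψ : (V → ℝ)ᵒᵈ | ConvexOn ℝ univ (ψ : V → ℝ) ∧
        q ≤ (ψ : V → ℝ)}, ∀ z ∈ c, z ≤ ub := by
    intro c hc hchain ψ₀ hψ₀
    let C : Set (V × ℝ) := {p | ∃ ψ : V → ℝ, ψ ∈ c ∧ ψ p.1 ≤ p.2}
    have hbd : ∀ z, ∀ r ∈ {r | (z, r) ∈ C}, q z ≤ r := by
      rintro z r ⟨ψ, hψ, hr⟩
      exact ((hc hψ).2 z).trans hr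
    have hne : ∀ z, {r | (z, r) ∈ C}.Nonempty := fun z => ⟨_, ψ₀, hψ₀, le_rfl⟩
    have hC : Convex ℝ C := by
      rintro ⟨x, r⟩ ⟨ψ₁, h₁, hr⟩ ⟨y, s⟩ ⟨ψ₂, h₂, hs⟩ a b ha hb hab
      -- the two functions are comparable, so the smaller one serves both points
      obtain ⟨ψ, hψ, hle₁, hle₂⟩ : ∃ ψ : V → ℝ, ψ ∈ c ∧ ψ ≤ ψ₁ ∧ ψ ≤ ψ₂ := by
        rcases hchain.total h₁ h₂ with h | h
        · exact ⟨ψ₂, h₂, h, le_refl (α := V → ℝ) _⟩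
        · exact ⟨ψ₁, h₁, le_refl (α := V → ℝ) _, h⟩
      refine ⟨ψ, hψ, ?_⟩
      have h := (hc hψ).1.2 (mem_univ x) (mem_univ y) ha hb hab
      have h3 := mul_le_mul_of_nonneg_left ((hle₁ x).trans hr) ha
      have h4 := mul_le_mul_of_nonneg_left ((hle₂ y).trans hs) hb
      simp only [smul_eq_mul] at h
      simp only [Prod.smul_mk, Prod.mk_add_mk, smul_eq_mul]
      linarith
    refine ⟨fun z => sInf {r | (z, r) ∈ C}, ⟨convexOn_sInf hC hne fun z => ⟨q z, hbd z⟩,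
      fun z => le_csInf (hne z) (hbd z)⟩, ?_⟩
    intro ψ hψ z
    exact csInf_le ⟨q z, hbd z⟩ ⟨ψ, hψ, le_rfl⟩
  obtain ⟨ψ, h1, h2⟩ := @zorn_le_nonempty₀ (V → ℝ)ᵒᵈ _ _ hchain φ ⟨hφ, hq⟩
  exact ⟨ψ, h2.1.1, h2.1.2, h1, fun ψ' h3 h4 h5 => h2.2 ⟨h3, h4⟩ h5⟩

/-- Sandwich theorem: an affine function separates a concave function from a convex one. -/
lemma exists_affine_between {d : ℕ} (k φ : (Fin d → ℝ) → ℝ) (hk : ConcaveOn ℝ univ k)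
    (hφ : ConvexOn ℝ univ φ) (hkφ : ∀ y, k y ≤ φ y) :
    ∃ (L : (Fin d → ℝ) →L[ℝ] ℝ) (c : ℝ), ∀ y, k y ≤ L y + c ∧ L y + c ≤ φ y := by
  have hcont : Continuous φ := by
    rw [← continuousOn_univ]; exact hφ.continuousOn isOpen_univ
  obtain ⟨f, u, h1, h2⟩ := geometric_hahn_banach_open
    (s := {p : (Fin d → ℝ) × ℝ | p.1 ∈ univ ∧ φ p.1 < p.2})
    (t := {p : (Fin d → ℝ) × ℝ | p.1 ∈ univ ∧ p.2 ≤ k p.1})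
    hφ.convex_strict_epigraph
    (by simpa using isOpen_lt (hcont.comp continuous_fst) continuous_snd)
    hk.convex_hypograph
    (by
      rw [Set.disjoint_left]
      rintro ⟨y, t⟩ ⟨-, h⟩ ⟨-, h'⟩
      exact absurd (h'.trans (hkφ y)) (not_le.2 h))
  have hf : ∀ y t, f (y, t) = f (y, 0) + t * f (0, 1) := by
    intro y t
    have : ((y, t) : (Fin d → ℝ) × ℝ) = (y, 0) + t • (0, 1) := by simp
    rw [this, map_add, map_smul, smul_eq_mul]
  set β := f (0, 1) with hβ
  have hβneg : β < 0 := by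
    have h3 := h1 (0, φ 0 + 1) ⟨mem_univ _, by simp⟩
    have h4 := h2 (0, k 0) ⟨mem_univ _, le_rfl⟩
    rw [hf] at h3 h4
    have h5 := hkφ 0
    by_contra! h
    nlinarith
  refine ⟨-(1 / β) • f.comp (ContinuousLinearMap.inl ℝ _ _), u / β, fun y => ⟨?_, ?_⟩⟩
  · have h4 := h2 (y, k y) ⟨mem_univ _, le_rfl⟩
    rw [hf] at h4
    have : k y ≤ (u - f (y, 0)) / β := by
      rw [le_div_iff_of_neg hβneg]; linarith
    simp only [_root_.smul_apply, ContinuousLinearMap.comp_apply,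
      ContinuousLinearMap.inl_apply, smul_eq_mul]
    calc k y ≤ (u - f (y, 0)) / β := this
      _ = _ := by ring
  · have : (u - f (y, 0)) / β ≤ φ y := by
      refine le_of_forall_pos_le_add fun δ hδ => ?_
      have h3 := h1 (y, φ y + δ) ⟨mem_univ _, by simpa using hδ⟩
      rw [hf] at h3
      rw [div_le_iff_of_neg hβneg]; linarith
    simp only [_root_.smul_apply, ContinuousLinearMap.comp_apply,
      ContinuousLinearMap.inl_apply, smul_eq_mul]
    calc _ = (u - f (y, 0)) / β := by ring
      _ ≤ φ y := this

variable {d : ℕ} {S : Matrix (Fin d) (Fin d) ℝ}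

/-- If a convex function lies above `q`, then over every choice of the positive coordinates there
is a point `x` whose tangent function `ℓ_x` lies below it. -/
lemma exists_ell_le_fibre (T : (Fin d → ℝ) ≃L[ℝ] (Fin d → ℝ)) (ε : Fin d → ℝ)
    (hε : ∀ i, ε i = 1 ∨ ε i = -1) (hT : ∀ x y, Sb S x y = ∑ i, ε i * (T x i * T y i))
    (φ : (Fin d → ℝ) → ℝ) (hφ : ConvexOn ℝ univ φ) (hq : qf S ≤ φ) (a : Fin d → ℝ) :
    ∃ x, (∀ i, ε i = 1 → T x i = a i) ∧ ∀ y, ell S x y ≤ φ y := by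
  -- the concave minorant of `q` that is tangent at `a` in the positive coordinates
  let g : Fin d → ℝ → ℝ := fun i t => if ε i = 1 then a i * t - a i ^ 2 / 2 else -t ^ 2 / 2
  let k : (Fin d → ℝ) → ℝ := fun y => ∑ i, g i (T y i)
  have hk : ConcaveOn ℝ univ k := by
    refine ⟨convex_univ, fun x _ y _ r s hr hs hrs => ?_⟩
    simp only [k, smul_eq_mul, map_add, map_smul, Finset.mul_sum, ← Finset.sum_add_distrib,
      Pi.add_apply, Pi.smul_apply]
    refine Finset.sum_le_sum fun i _ => ?_
    obtain rfl : s = 1 - r := by linarith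
    simp only [g]
    split_ifs
    · apply le_of_eq; ring
    · nlinarith [mul_nonneg (mul_nonneg hr hs) (sq_nonneg (T x i - T y i))]
  have hkφ : ∀ y, k y ≤ φ y := by
    intro y
    refine le_trans ?_ (hq y)
    simp only [k, qf, hT, Finset.sum_div]
    refine Finset.sum_le_sum fun i _ => ?_
    simp only [g]
    split_ifs with h
    · rw [h]; nlinarith [sq_nonneg (T y i - a i)]
    · rw [(hε i).resolve_left h]; apply le_of_eq; ring
  obtain ⟨L, c, hL⟩ := exists_affine_between k φ hk hφ hkφ
  let l : Fin d → ℝ := fun i => L (T.symm (Pi.single i 1))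
  have hLl : ∀ y, L y = ∑ i, T y i * l i := by
    intro y
    have h := congrArg (fun z => L (T.symm z)) (pi_eq_sum_univ' (T y))
    simp only [T.symm_apply_apply, map_sum, map_smul, smul_eq_mul] at h
    rw [h]
  let x := T.symm fun i => if ε i = 1 then a i else -l i
  have hx : ∀ i, T x i = if ε i = 1 then a i else -l i := fun i => by simp [x]
  refine ⟨x, fun i hi => by simp [hx, hi], fun y => le_trans ?_ (hL y).2⟩
  let y' := T.symm fun i => if ε i = 1 then T y i else -l i
  have hy' : ∀ i, T y' i = if ε i = 1 then T y i else -l i := fun i => by simp [y']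
  have h := (hL y').1
  suffices hs : ell S x y - L y = k y' - L y' by linarith
  simp only [ell, k, hLl, hT, Finset.sum_div, ← Finset.sum_sub_distrib]
  refine Finset.sum_congr rfl fun i _ => ?_
  simp only [hx, hy', g]
  split_ifs with hi
  · rw [hi]; ring
  · rw [(hε i).resolve_left hi]; ring

/-- Every convex majorant `φ` of `q` dominates the Fitzpatrick function of an `S`-monotone set
that meets all fibres over the positive coordinates. The set consists of the points `x` with
`ℓ_x ≤ ψ` for a minimal convex majorant `ψ ≤ φ`: minimality forces `ψ(x) = q(x)` there. -/
lemma exists_mono_le (hS : S.IsHermitian)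
    (T : (Fin d → ℝ) ≃L[ℝ] (Fin d → ℝ)) (ε : Fin d → ℝ)
    (hε : ∀ i, ε i = 1 ∨ ε i = -1) (hT : ∀ x y, Sb S x y = ∑ i, ε i * (T x i * T y i))
    (φ : (Fin d → ℝ) → ℝ) (hφ : ConvexOn ℝ univ φ) (hq : qf S ≤ φ) :
    ∃ G : Set (Fin d → ℝ), SMono S G ∧ (∀ a : Fin d → ℝ, ∃ x ∈ G, ∀ i, ε i = 1 → T x i = a i) ∧
      ∀ x ∈ G, ∀ y, ell S x y ≤ φ y := by
  obtain ⟨ψ, hψ, hqψ, hψφ, hmin⟩ := exists_minimal_convex (qf S) φ hφ hq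
  have hkey : ∀ x, (∀ y, ell S x y ≤ ψ y) → ψ x ≤ qf S x := by
    intro x hx
    -- the convex hull of the epigraph of `ψ` and the point `(x, q(x))` still lies above `q`
    let E : Set ((Fin d → ℝ) × ℝ) := {p | p.1 ∈ univ ∧ ψ p.1 ≤ p.2}
    have hE : Convex ℝ E := hψ.convex_epigraph
    have hEne : E.Nonempty := ⟨(0, ψ 0), mem_univ _, le_rfl⟩
    let C := convexHull ℝ (insert (x, qf S x) E)
    have hC : Convex ℝ C := convex_convexHull _ _
    have hsub : insert (x, qf S x) E ⊆ C := subset_convexHull _ _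
    have hbd : ∀ z, ∀ r ∈ {r | (z, r) ∈ C}, qf S z ≤ r := by
      intro z r hr
      simp only [C, mem_ofPred_eq] at hr
      rw [convexHull_insert hEne, hE.convexHull_eq, mem_convexJoin] at hr
      obtain ⟨p, rfl, ⟨y, t⟩, ⟨-, ht⟩, α, β, hα, hβ, hαβ, h⟩ := hr
      simp only [Prod.smul_mk, Prod.mk_add_mk, smul_eq_mul, Prod.mk.injEq] at h ht
      obtain ⟨rfl, rfl⟩ := h
      have h1 := hx y
      have h2 := hqψ y
      rw [ell_eq hS] at h1
      obtain rfl : α = 1 - β := by linarith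
      have h3 : qf S ((1 - β) • x + β • y) = (1 - β) * qf S x + β * qf S y
          - (1 - β) * β * qf S (y - x) := by
        simp only [qf, Sb_add_left, Sb_add_right, Sb_sub_left, Sb_sub_right, Sb_smul_left,
          Sb_smul_right, Sb_comm hS y x]
        ring
      rw [h3]
      have h4 : 0 ≤ t - qf S y + (1 - β) * qf S (y - x) := by nlinarith
      nlinarith [mul_nonneg hβ h4]
    have hne : ∀ z, {r | (z, r) ∈ C}.Nonempty := fun z =>
      ⟨ψ z, hsub (mem_insert_of_mem _ ⟨mem_univ _, le_rfl⟩)⟩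
    have h := hmin (fun z => sInf {r | (z, r) ∈ C})
      (convexOn_sInf hC hne fun z => ⟨_, hbd z⟩) (fun z => le_csInf (hne z) (hbd z))
      (fun z => csInf_le ⟨_, hbd z⟩ (hsub (mem_insert_of_mem _ ⟨mem_univ _, le_rfl⟩)))
    exact (h x).trans (csInf_le ⟨_, hbd x⟩ (hsub (mem_insert _ _)))
  refine ⟨{x | ∀ y, ell S x y ≤ ψ y}, ?_, ?_, fun x hx y => (hx y).trans (hψφ y)⟩
  · intro x hx y hy
    have h := (hy x).trans (hkey x hx)
    rw [ell_eq hS] at h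
    simp only [qf] at h ⊢
    linarith
  · intro a
    obtain ⟨x, h1, h2⟩ := exists_ell_le_fibre T ε hε hT ψ hψ hqψ a
    exact ⟨x, h2, h1⟩

/-- An `S`-monotone set that meets all fibres over the positive coordinates is maximal. -/
lemma maxSMono_of_fibre
    (T : (Fin d → ℝ) ≃L[ℝ] (Fin d → ℝ)) (ε : Fin d → ℝ)
    (hε : ∀ i, ε i = 1 ∨ ε i = -1) (hT : ∀ x y, Sb S x y = ∑ i, ε i * (T x i * T y i))
    (G : Set (Fin d → ℝ)) (hG : SMono S G)
    (hfib : ∀ a : Fin d → ℝ, ∃ x ∈ G, ∀ i, ε i = 1 → T x i = a i) : MaxSMono S G := by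
  refine ⟨hG, fun H hH hGH => Subset.antisymm (fun h hh => ?_) hGH⟩
  obtain ⟨x, hx, hxh⟩ := hfib (T h)
  have h1 := hH h hh x (hGH hx)
  rw [hT] at h1
  have h2 : ∀ i ∈ Finset.univ, ε i * (T (h - x) i * T (h - x) i) ≤ 0 := by
    intro i _
    rcases hε i with hi | hi
    · simp [hi, hxh i hi]
    · rw [hi]; nlinarith [mul_self_nonneg (T (h - x) i)]
  have h3 := (Finset.sum_eq_zero_iff_of_nonpos h2).1 (le_antisymm (Finset.sum_nonpos h2) h1)
  have h4 : T (h - x) = 0 := by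
    funext i
    have := h3 i (Finset.mem_univ i)
    rcases hε i with hi | hi <;> simpa [hi] using this
  have h5 : h = x := by
    rw [← sub_eq_zero]
    exact T.injective (by rw [h4, map_zero])
  rwa [h5]

end Convex

/-! ### Riesz representation for functions of prescribed growth -/

section Representation

open CompactlySupported

/-- The continuous functions `f` with `|f| ≤ c (1 + r)` for some constant `c`. -/
def growthSpace {X : Type*} [TopologicalSpace X] (r : X → ℝ) : Submodule ℝ (X → ℝ) where
  carrier := {f | Continuous f ∧ ∃ c, 0 ≤ c ∧ ∀ p, |f p| ≤ c * (1 + r p)}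
  zero_mem' := ⟨continuous_const, 0, le_rfl, fun p => by simp⟩
  add_mem' := by
    rintro f g ⟨hf, c, hc, h⟩ ⟨hg, c', hc', h'⟩
    refine ⟨hf.add hg, c + c', add_nonneg hc hc', fun p => ?_⟩
    have h1 := abs_add_le (f p) (g p)
    have h2 := h p
    have h3 := h' p
    simp only [Pi.add_apply]
    linarith
  smul_mem' := by
    rintro a f ⟨hf, c, hc, h⟩
    refine ⟨hf.const_smul a, |a| * c, by positivity, fun p => ?_⟩
    simp only [Pi.smul_apply, smul_eq_mul, abs_mul, mul_assoc]
    exact mul_le_mul_of_nonneg_left (h p) (abs_nonneg a)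

/-- Riesz representation on the space of functions of growth at most `r`: a positive functional
is integration against a measure provided that it gives no mass to infinity. -/
lemma exists_measure_of_growth {X : Type*} [TopologicalSpace X] [T2Space X]
    [LocallyCompactSpace X] [MeasurableSpace X] [BorelSpace X] (r : X → ℝ)
    (hr0 : ∀ p, 0 ≤ r p) (hrc : Continuous r) (hproper : ∀ t : ℝ, IsCompact {p | r p ≤ t})
    (ℓ : growthSpace r →ₗ[ℝ] ℝ) (hpos : ∀ f, (∀ p, 0 ≤ f.1 p) → 0 ≤ ℓ f)
    (tail : ℕ → growthSpace r) (htail : ∀ n p, (tail n).1 p = max (r p - n) 0)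
    (hlim : Tendsto (fun n => ℓ (tail n)) atTop (nhds 0)) :
    ∃ γ : Measure X, ∀ f, Integrable f.1 γ ∧ ∫ p, f.1 p ∂γ = ℓ f := by
  have hmono : ∀ f g : growthSpace r, (∀ p, f.1 p ≤ g.1 p) → ℓ f ≤ ℓ g := by
    intro f g h
    have := hpos (g - f) fun p => by simpa using h p
    rw [map_sub] at this
    linarith
  have hmem : ∀ f : C_c(X, ℝ), (f : X → ℝ) ∈ growthSpace r := by
    intro f
    obtain ⟨c, hc⟩ := f.hasCompactSupport'.exists_bound_of_continuous f.continuous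
    refine ⟨f.continuous, |c|, abs_nonneg c, fun p => ?_⟩
    have h1 := hc p
    have h2 : ‖f p‖ = |f p| := rfl
    have h3 := le_abs_self c
    have h4 : 0 ≤ |c| * r p := mul_nonneg (abs_nonneg c) (hr0 p)
    change ‖f p‖ ≤ c at h1
    nlinarith
  let Λ₀ : C_c(X, ℝ) →ₗ[ℝ] ℝ :=
    { toFun := fun f => ℓ ⟨f, hmem f⟩
      map_add' := fun f g => by rw [← map_add]; rfl
      map_smul' := fun a f => by rw [← map_smul]; rfl }
  let Λ : C_c(X, ℝ) →ₚ[ℝ] ℝ := PositiveLinearMap.mk₀ Λ₀ fun f hf => hpos _ fun p => hf p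
  let γ := RealRMK.rieszMeasure Λ
  have hΛ : ∀ f : C_c(X, ℝ), ∫ p, f p ∂γ = ℓ ⟨f, hmem f⟩ := fun f =>
    RealRMK.integral_rieszMeasure Λ f
  -- cutoffs, equal to `1` where `r ≤ 2n` and compactly supported because `r` is proper
  let χ : ℕ → X → ℝ := fun n p => max 0 (min 1 (2 * n + 1 - r p))
  have hχc : ∀ n, Continuous (χ n) := fun n => by fun_prop
  have hχ0 : ∀ n p, 0 ≤ χ n p := fun n p => le_max_left _ _
  have hχ1 : ∀ n p, χ n p ≤ 1 := fun n p => max_le zero_le_one (min_le_left _ _)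
  have hχeq : ∀ (n : ℕ) p, r p ≤ 2 * (n : ℝ) → χ n p = 1 := by
    intro n p h
    have : min 1 (2 * (n : ℝ) + 1 - r p) = 1 := min_eq_left (by linarith)
    simp [χ, this]
  have hχsupp : ∀ n, HasCompactSupport (χ n) := by
    intro n
    refine HasCompactSupport.intro (hproper (2 * n + 1)) fun p hp => ?_
    have : 2 * (n : ℝ) + 1 < r p := not_le.1 hp
    exact max_eq_left ((min_le_right _ _).trans (by linarith))
  let cut : growthSpace r → ℕ → C_c(X, ℝ) := fun f n =>
    ⟨⟨fun p => χ n p * f.1 p, (hχc n).mul f.2.1⟩, (hχsupp n).mul_right⟩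
  have hcut : ∀ f n p, cut f n p = χ n p * f.1 p := fun f n p => rfl
  have hcutlim : ∀ f p, Tendsto (fun n => cut f n p) atTop (nhds (f.1 p)) := by
    intro f p
    obtain ⟨N, hN⟩ := exists_nat_ge (r p)
    refine tendsto_const_nhds.congr' ?_
    filter_upwards [eventually_ge_atTop N] with n hn
    have : (N : ℝ) ≤ n := by exact_mod_cast hn
    rw [hcut, hχeq n p (by have := hr0 p; linarith), one_mul]
  have hℓlim : ∀ f, Tendsto (fun n => ℓ ⟨cut f n, hmem _⟩) atTop (nhds (ℓ f)) := by
    intro f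
    obtain ⟨hfc, c, hc, hf⟩ := f.2
    have hbd : ∀ n : ℕ, 1 ≤ n → |ℓ ⟨cut f n, hmem _⟩ - ℓ f| ≤ 4 * c * ℓ (tail n) := by
      intro n hn
      have hn' : (1 : ℝ) ≤ n := by exact_mod_cast hn
      have key : ∀ p, |cut f n p - f.1 p| ≤ 4 * c * (tail n).1 p := by
        intro p
        rw [hcut, htail]
        by_cases h : r p ≤ 2 * n
        · rw [hχeq n p h]
          simp only [one_mul, sub_self, abs_zero]
          positivity
        · rw [not_le] at h
          have h1 : |χ n p * f.1 p - f.1 p| ≤ |f.1 p| := by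
            have : χ n p * f.1 p - f.1 p = -((1 - χ n p) * f.1 p) := by ring
            rw [this, abs_neg, abs_mul, abs_of_nonneg (by linarith [hχ1 n p])]
            nlinarith [hχ0 n p, abs_nonneg (f.1 p)]
          rw [max_eq_left (by linarith)]
          have h2 := hf p
          have h3 : c * (1 + r p) ≤ c * (4 * (r p - n)) :=
            mul_le_mul_of_nonneg_left (by linarith) hc
          linarith
      rw [← map_sub, abs_le]
      constructor
      · rw [← smul_eq_mul, ← map_smul, ← map_neg]
        exact hmono _ _ fun p => (abs_le.1 (key p)).1
      · rw [← smul_eq_mul, ← map_smul]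
        exact hmono _ _ fun p => (abs_le.1 (key p)).2
    rw [tendsto_iff_norm_sub_tendsto_zero]
    refine squeeze_zero' (Eventually.of_forall fun n => norm_nonneg _)
      ((eventually_ge_atTop 1).mono hbd) ?_
    simpa using hlim.const_mul (4 * c)
  -- `1 + r` is integrable, by Fatou's lemma
  let w : growthSpace r := ⟨fun p => 1 + r p, by fun_prop, 1, zero_le_one, fun p => by
    rw [one_mul, abs_of_nonneg (by linarith [hr0 p])]⟩
  have hw0 : ∀ p, 0 ≤ w.1 p := fun p => by have := hr0 p; change 0 ≤ 1 + r p; linarith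
  have hwint : Integrable w.1 γ := by
    refine ⟨w.2.1.aestronglyMeasurable, ?_⟩
    rw [hasFiniteIntegral_iff_ofReal (Eventually.of_forall hw0)]
    have h1 : ∀ p, ENNReal.ofReal (w.1 p)
        = liminf (fun n => ENNReal.ofReal (cut w n p)) atTop := fun p =>
      ((ENNReal.continuous_ofReal.tendsto _).comp (hcutlim w p)).liminf_eq.symm
    simp_rw [h1]
    refine (lintegral_liminf_le fun n =>
      ENNReal.measurable_ofReal.comp (cut w n).continuous.measurable).trans_lt ?_
    refine lt_of_le_of_lt ?_ (ENNReal.ofReal_lt_top (r := ℓ w))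
    refine liminf_le_of_frequently_le' (Eventually.of_forall fun n => ?_).frequently
    change ∫⁻ p, ENNReal.ofReal (cut w n p) ∂γ ≤ _
    rw [← ofReal_integral_eq_lintegral_ofReal (cut w n).integrable
      (Eventually.of_forall fun p => mul_nonneg (hχ0 n p) (hw0 p)), hΛ]
    refine ENNReal.ofReal_le_ofReal (hmono _ _ fun p => ?_)
    exact mul_le_of_le_one_left (hw0 p) (hχ1 n p)
  refine ⟨γ, fun f => ?_⟩
  obtain ⟨hfc, c, hc, hf⟩ := f.2
  have hcint : Integrable (fun p => c * w.1 p) γ := hwint.const_mul c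
  refine ⟨hcint.mono' hfc.aestronglyMeasurable (Eventually.of_forall hf), ?_⟩
  refine tendsto_nhds_unique ?_ (hℓlim f)
  simp_rw [← hΛ]
  refine tendsto_integral_of_dominated_convergence (fun p => c * w.1 p)
    (fun n => (cut f n).continuous.aestronglyMeasurable) hcint
    (fun n => Eventually.of_forall fun p => ?_) (Eventually.of_forall (hcutlim f))
  rw [hcut, norm_mul, Real.norm_of_nonneg (hχ0 n p)]
  exact (mul_le_of_le_one_left (norm_nonneg _) (hχ1 n p)).trans (hf p)

/-- Hahn–Banach: a sublinear functional has a linear minorant that agrees with it at a given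
point. -/
lemma exists_linear_le_sublinear {E : Type*} [AddCommGroup E] [Module ℝ E] (N : E → ℝ)
    (N_hom : ∀ c : ℝ, 0 < c → ∀ x, N (c • x) = c * N x) (N_add : ∀ x y, N (x + y) ≤ N x + N y)
    (f₀ : E) : ∃ g : E →ₗ[ℝ] ℝ, g f₀ = N f₀ ∧ ∀ x, g x ≤ N x := by
  have h0 : N 0 = 0 := by
    have := N_hom 2 two_pos 0
    rw [smul_zero] at this
    linarith
  have H : ∀ c : ℝ, c • f₀ = 0 → (RingHom.id ℝ) c • N f₀ = 0 := by
    intro c hc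
    rcases smul_eq_zero.1 hc with h | h
    · simp [h]
    · simp [h, h0]
  obtain ⟨g, h1, h2⟩ := exists_extension_of_le_sublinear
    (LinearPMap.mkSpanSingleton' f₀ (N f₀) H) N N_hom N_add (by
      rintro ⟨x, hx⟩
      obtain ⟨c, rfl⟩ := Submodule.mem_span_singleton.1 hx
      rw [LinearPMap.mkSpanSingleton'_apply]
      simp only [RingHom.id_apply, smul_eq_mul]
      rcases lt_trichotomy c 0 with hc | rfl | hc
      · have h3 := N_add (c • f₀) (-c • f₀)
        rw [N_hom (-c) (by linarith), neg_smul, add_neg_cancel, h0] at h3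
        linarith
      · simp [h0]
      · rw [N_hom c hc])
  refine ⟨g, ?_, h2⟩
  have h3 := h1 ⟨f₀, Submodule.mem_span_singleton_self f₀⟩
  exact h3.trans (LinearPMap.mkSpanSingleton'_apply_self _ _ _ _)

end Representation

/-! ### The sublinear functional of the transport problem and the martingale property -/

section Plan

variable {d : ℕ}

/-- The squared Euclidean norm on `ℝ^d`. -/
def sqn (x : Fin d → ℝ) : ℝ := x ⬝ᵥ x

lemma sqn_nonneg (x : Fin d → ℝ) : 0 ≤ sqn x :=
  show 0 ≤ ∑ i, x i * x i from Finset.sum_nonneg fun i _ => mul_self_nonneg (x i)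

lemma continuous_sqn : Continuous (sqn : (Fin d → ℝ) → ℝ) := by
  unfold sqn dotProduct
  fun_prop

lemma norm_sq_le_sqn (x : Fin d → ℝ) : ‖x‖ ^ 2 ≤ sqn x := by
  have h : ‖x‖ ≤ Real.sqrt (sqn x) := by
    refine (pi_norm_le_iff_of_nonneg (Real.sqrt_nonneg _)).2 fun i => ?_
    refine Real.le_sqrt_of_sq_le ?_
    rw [Real.norm_eq_abs, sq_abs, sq]
    exact Finset.single_le_sum (f := fun i => x i * x i) (fun i _ => mul_self_nonneg (x i))
      (Finset.mem_univ i)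
  calc ‖x‖ ^ 2 ≤ Real.sqrt (sqn x) ^ 2 := by gcongr
    _ = sqn x := Real.sq_sqrt (sqn_nonneg x)

lemma sqn_le (x : Fin d → ℝ) : sqn x ≤ d * ‖x‖ ^ 2 := by
  have h : ∀ i ∈ Finset.univ, x i * x i ≤ ‖x‖ ^ 2 := by
    intro i _
    have h1 : |x i| ≤ ‖x‖ := norm_le_pi_norm x i
    calc x i * x i = |x i| ^ 2 := by rw [sq_abs, sq]
      _ ≤ ‖x‖ ^ 2 := by gcongr
  have h2 := Finset.sum_le_card_nsmul _ _ _ h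
  simp only [Finset.card_univ, Fintype.card_fin, nsmul_eq_mul] at h2
  exact h2

/-- Tangent inequality for the squared norm. -/
lemma sqn_le_tangent (x y : Fin d → ℝ) : sqn x ≤ sqn y + ((-2 : ℝ) • x) ⬝ᵥ (y - x) := by
  have h := sqn_nonneg (y - x)
  have h2 : y ⬝ᵥ x = x ⬝ᵥ y := dotProduct_comm _ _
  simp only [sqn, dotProduct_sub, sub_dotProduct, smul_dotProduct, smul_eq_mul] at *
  linarith

lemma integrable_sqn {ν : Measure (Fin d → ℝ)} (hν : Integrable (fun y => ‖y‖ ^ 2) ν) :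
    Integrable sqn ν :=
  (hν.const_mul (d : ℝ)).mono' continuous_sqn.aestronglyMeasurable
    (Eventually.of_forall fun x => by
      rw [Real.norm_of_nonneg (sqn_nonneg x)]; exact sqn_le x)

/-- The growth gauge `|x|² + |y|²` on `ℝ^d × ℝ^d`. -/
def rr (p : (Fin d → ℝ) × (Fin d → ℝ)) : ℝ := sqn p.1 + sqn p.2

lemma rr_nonneg (p : (Fin d → ℝ) × (Fin d → ℝ)) : 0 ≤ rr p :=
  add_nonneg (sqn_nonneg _) (sqn_nonneg _)

lemma continuous_rr : Continuous (rr : (Fin d → ℝ) × (Fin d → ℝ) → ℝ) :=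
  (continuous_sqn.comp continuous_fst).add (continuous_sqn.comp continuous_snd)

lemma isCompact_rr_le (t : ℝ) : IsCompact {p : (Fin d → ℝ) × (Fin d → ℝ) | rr p ≤ t} := by
  refine Metric.isCompact_of_isClosed_isBounded (isClosed_le continuous_rr continuous_const) ?_
  refine (Metric.isBounded_closedBall (x := 0) (r := 1 + |t|)).subset fun p hp => ?_
  rw [mem_closedBall_zero_iff, Prod.norm_def]
  have hp' : rr p ≤ t := hp
  have h0 := le_abs_self t
  have aux : ∀ x : Fin d → ℝ, sqn x ≤ t → ‖x‖ ≤ 1 + |t| := by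
    intro x hx
    have h1 := norm_sq_le_sqn x
    nlinarith [sq_nonneg (‖x‖ - 1), norm_nonneg x]
  have h1 := sqn_nonneg p.1
  have h2 := sqn_nonneg p.2
  exact max_le (aux _ (by unfold rr at hp'; linarith)) (aux _ (by unfold rr at hp'; linarith))

/-- The functional `f ↦ inf {∫ φ dν | f(x,y) ≤ φ(y) + ⟨v(x), y - x⟩}` is sublinear and finite;
its linear minorants are the (generalized) martingale couplings. This provides one that attains
the value at `f₀`. -/
lemma exists_functional (ν : Measure (Fin d → ℝ)) [IsProbabilityMeasure ν]
    (hν : Integrable (fun y => ‖y‖ ^ 2) ν)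
    (f₀ : growthSpace (rr (d := d))) :
    ∃ ℓ : growthSpace (rr (d := d)) →ₗ[ℝ] ℝ,
      (∀ (f : growthSpace (rr (d := d))) (φ : (Fin d → ℝ) → ℝ)
        (v : (Fin d → ℝ) → Fin d → ℝ), Integrable φ ν →
        (∀ x y, f.1 (x, y) ≤ φ y + v x ⬝ᵥ (y - x)) → ℓ f ≤ ∫ y, φ y ∂ν) ∧
      ∀ δ > 0, ∃ (φ : (Fin d → ℝ) → ℝ) (v : (Fin d → ℝ) → Fin d → ℝ), Integrable φ ν ∧
        (∀ x y, f₀.1 (x, y) ≤ φ y + v x ⬝ᵥ (y - x)) ∧ ∫ y, φ y ∂ν ≤ ℓ f₀ + δ := by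
  let A : growthSpace (rr (d := d)) → Set ℝ := fun f =>
    {t | ∃ (φ : (Fin d → ℝ) → ℝ) (v : (Fin d → ℝ) → Fin d → ℝ), Integrable φ ν ∧
        (∀ x y, f.1 (x, y) ≤ φ y + v x ⬝ᵥ (y - x)) ∧ ∫ y, φ y ∂ν = t}
  have hsq := integrable_sqn hν
  have hne : ∀ f, (A f).Nonempty := by
    intro f
    obtain ⟨-, c, hc, hf⟩ := f.2
    refine ⟨_, fun y => c * (1 + 2 * sqn y), fun x => c • ((-2 : ℝ) • x),
      ((integrable_const 1).add (hsq.const_mul 2)).const_mul c, fun x y => ?_, rfl⟩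
    refine ((le_abs_self _).trans (hf (x, y))).trans ?_
    rw [smul_dotProduct, smul_eq_mul, ← mul_add]
    refine mul_le_mul_of_nonneg_left ?_ hc
    have := sqn_le_tangent x y
    simp only [rr]
    linarith
  have hbdd : ∀ f, BddBelow (A f) := by
    intro f
    obtain ⟨-, c, hc, hf⟩ := f.2
    refine ⟨∫ y, -(c * (1 + 2 * sqn y)) ∂ν, ?_⟩
    rintro t ⟨φ, v, hφ, h, rfl⟩
    refine integral_mono (((integrable_const 1).add (hsq.const_mul 2)).const_mul c).neg hφ
      fun y => ?_
    have h1 := h y y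
    have h2 := (abs_le.1 (hf (y, y))).1
    simp only [sub_self, dotProduct_zero, add_zero, rr] at h1 h2
    change -(c * (1 + 2 * sqn y)) ≤ φ y
    linarith
  let N : growthSpace (rr (d := d)) → ℝ := fun f => sInf (A f)
  have hadd : ∀ f g, N (f + g) ≤ N f + N g := by
    intro f g
    refine le_of_forall_pos_le_add fun δ hδ => ?_
    obtain ⟨s, ⟨φ, v, h1, h2, h3⟩, hs⟩ := exists_lt_of_csInf_lt (hne f)
      (lt_add_of_pos_right (sInf (A f)) (half_pos hδ))
    obtain ⟨t, ⟨φ', v', h1', h2', h3'⟩, ht⟩ := exists_lt_of_csInf_lt (hne g)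
      (lt_add_of_pos_right (sInf (A g)) (half_pos hδ))
    have h : s + t ∈ A (f + g) := by
      refine ⟨φ + φ', v + v', h1.add h1', fun x y => ?_, ?_⟩
      · have h4 := h2 x y
        have h5 := h2' x y
        simp only [Submodule.coe_add, Pi.add_apply, add_dotProduct]
        linarith
      · rw [← h3, ← h3', ← integral_add h1 h1']; rfl
    have := csInf_le (hbdd (f + g)) h
    change sInf _ ≤ sInf _ + sInf _ + δ
    linarith
  have hhom1 : ∀ c : ℝ, 0 < c → ∀ f, N (c • f) ≤ c * N f := by
    intro c hc f
    refine le_of_forall_pos_le_add fun δ hδ => ?_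
    obtain ⟨s, ⟨φ, v, h1, h2, h3⟩, hs⟩ := exists_lt_of_csInf_lt (hne f)
      (lt_add_of_pos_right (sInf (A f)) (div_pos hδ hc))
    have h : c * s ∈ A (c • f) := by
      refine ⟨fun y => c * φ y, fun x => c • v x, h1.const_mul c, fun x y => ?_, ?_⟩
      · rw [smul_dotProduct, smul_eq_mul, ← mul_add]
        exact mul_le_mul_of_nonneg_left (h2 x y) hc.le
      · rw [← h3, integral_const_mul]
    have h4 := csInf_le (hbdd (c • f)) h
    have h5 : c * s ≤ c * (sInf (A f) + δ / c) := mul_le_mul_of_nonneg_left hs.le hc.le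
    rw [mul_add, mul_div_cancel₀ _ hc.ne'] at h5
    exact h4.trans h5
  have hhom : ∀ c : ℝ, 0 < c → ∀ f, N (c • f) = c * N f := by
    intro c hc f
    refine le_antisymm (hhom1 c hc f) ?_
    have h := hhom1 c⁻¹ (inv_pos.2 hc) (c • f)
    rw [smul_smul, inv_mul_cancel₀ hc.ne', one_smul] at h
    have h2 := mul_le_mul_of_nonneg_left h hc.le
    rwa [← mul_assoc, mul_inv_cancel₀ hc.ne', one_mul] at h2
  have happ : ∀ δ > 0, ∃ (φ : (Fin d → ℝ) → ℝ) (v : (Fin d → ℝ) → Fin d → ℝ), Integrable φ ν ∧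
      (∀ x y, f₀.1 (x, y) ≤ φ y + v x ⬝ᵥ (y - x)) ∧ ∫ y, φ y ∂ν ≤ N f₀ + δ := by
    intro δ hδ
    obtain ⟨s, ⟨φ, v, h1, h2, h3⟩, hs⟩ := exists_lt_of_csInf_lt (hne f₀)
      (lt_add_of_pos_right (sInf (A f₀)) hδ)
    exact ⟨φ, v, h1, h2, h3.le.trans hs.le⟩
  have hle : ∀ (f : growthSpace (rr (d := d))) (φ : (Fin d → ℝ) → ℝ)
      (v : (Fin d → ℝ) → Fin d → ℝ), Integrable φ ν →
      (∀ x y, f.1 (x, y) ≤ φ y + v x ⬝ᵥ (y - x)) → N f ≤ ∫ y, φ y ∂ν :=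
    fun f φ v h1 h2 => csInf_le (hbdd f) ⟨φ, v, h1, h2, rfl⟩
  clear_value N
  obtain ⟨ℓ, h0, hℓ⟩ := exists_linear_le_sublinear N hhom hadd f₀
  rw [← h0] at happ
  exact ⟨ℓ, fun f φ v h1 h2 => (hℓ f).trans (hle f φ v h1 h2), happ⟩

/-- The martingale property can be tested against bounded continuous functions of `x`. -/
lemma martProp_of_forall (γ : Measure ((Fin d → ℝ) × (Fin d → ℝ))) [IsFiniteMeasure γ]
    (h1 : ∀ i, Integrable (fun p => p.1 i) γ) (h2 : ∀ i, Integrable (fun p => p.2 i) γ)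
    (h : ∀ (f : BoundedContinuousFunction (Fin d → ℝ) ℝ) (i : Fin d),
      ∫ p, f p.1 * (p.2 i - p.1 i) ∂γ = 0) : MartProp γ := by
  have hm : MeasurableSpace.comap (Prod.fst : (Fin d → ℝ) × (Fin d → ℝ) → _) inferInstance
      ≤ (inferInstance : MeasurableSpace ((Fin d → ℝ) × (Fin d → ℝ))) :=
    measurable_fst.comap_le
  have hi1 : Integrable (fun p : (Fin d → ℝ) × (Fin d → ℝ) => p.1) γ := Integrable.of_eval h1
  have hi2 : Integrable (fun p : (Fin d → ℝ) × (Fin d → ℝ) => p.2) γ := Integrable.of_eval h2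
  have key : ∀ (B : Set (Fin d → ℝ)) (_ : MeasurableSet B) (i : Fin d),
      ∫ p in Prod.fst ⁻¹' B, (p.2 i - p.1 i) ∂γ = 0 := by
    intro B hB i
    set k : (Fin d → ℝ) × (Fin d → ℝ) → ℝ := fun p => p.2 i - p.1 i with hk
    have hkm : Measurable k := by fun_prop
    have hki : Integrable k γ := (h2 i).sub (h1 i)
    let α : Measure (Fin d → ℝ) := (γ.withDensity fun p => ENNReal.ofReal (k p)).map Prod.fst
    let β : Measure (Fin d → ℝ) := (γ.withDensity fun p => ENNReal.ofReal (-k p)).map Prod.fst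
    have : IsFiniteMeasure (γ.withDensity fun p => ENNReal.ofReal (k p)) :=
      isFiniteMeasure_withDensity_ofReal hki.2
    have : IsFiniteMeasure (γ.withDensity fun p => ENNReal.ofReal (-k p)) :=
      isFiniteMeasure_withDensity_ofReal hki.neg.2
    have hInteg : ∀ (f : BoundedContinuousFunction (Fin d → ℝ) ℝ)
        (g : (Fin d → ℝ) × (Fin d → ℝ) → ℝ), Integrable g γ →
        Integrable (fun p => g p * f p.1) γ := by
      intro f g hg
      exact hg.mul_bdd (c := ‖f‖) (f.continuous.comp continuous_fst).aestronglyMeasurable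
        (Eventually.of_forall fun p => f.norm_coe_le_norm _)
    have hαβ : α = β := by
      refine ext_of_forall_integral_eq_of_IsFiniteMeasure fun f => ?_
      rw [integral_map measurable_fst.aemeasurable f.continuous.aestronglyMeasurable,
        integral_map measurable_fst.aemeasurable f.continuous.aestronglyMeasurable,
        integral_withDensity_eq_integral_toReal_smul (by fun_prop)
          (Eventually.of_forall fun _ => ENNReal.ofReal_lt_top),
        integral_withDensity_eq_integral_toReal_smul (by fun_prop)
          (Eventually.of_forall fun _ => ENNReal.ofReal_lt_top), ← sub_eq_zero]
      simp only [ENNReal.toReal_ofReal', smul_eq_mul]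
      rw [← integral_sub (hInteg f _ hki.pos_part) (hInteg f _ hki.neg_part)]
      refine Eq.trans ?_ (h f i)
      refine integral_congr_ae (Eventually.of_forall fun p => ?_)
      change max (k p) 0 * f p.1 - max (-k p) 0 * f p.1 = f p.1 * k p
      rw [← sub_mul, max_zero_sub_max_neg_zero_eq_self, mul_comm]
    have hB' := congrArg (fun m => m B) hαβ
    simp only [α, β, Measure.map_apply measurable_fst hB] at hB'
    rw [withDensity_apply _ (measurable_fst hB), withDensity_apply _ (measurable_fst hB)] at hB'
    rw [integral_eq_lintegral_pos_part_sub_lintegral_neg_part hki.integrableOn, hB', sub_self]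
  refine (ae_eq_condExp_of_forall_setIntegral_eq hm hi2 (fun s _ _ => hi1.integrableOn) ?_
    (Measurable.aestronglyMeasurable (comap_measurable _))).symm
  rintro s ⟨B, hB, rfl⟩ -
  funext i
  rw [eval_integral fun i => (h1 i).integrableOn, eval_integral fun i => (h2 i).integrableOn,
    eq_comm, ← sub_eq_zero, ← integral_sub (h2 i).integrableOn (h1 i).integrableOn]
  exact key B hB i

end Plan

/-! ### Existence of optimal martingale couplings -/

section Existence

variable {d : ℕ}

lemma sqn_sub_max_le (K : ℝ) (x y : Fin d → ℝ) :
    max (sqn x - K) 0 ≤ max (sqn y - K) 0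
      + (if K < sqn x then (-2 : ℝ) • x else 0) ⬝ᵥ (y - x) := by
  split_ifs with h
  · have h1 := sqn_le_tangent x y
    rw [max_eq_left (by linarith)]
    have h2 := le_max_left (sqn y - K) 0
    linarith
  · rw [max_eq_right (by linarith)]
    simp

lemma tendsto_integral_sqn_tail (ν : Measure (Fin d → ℝ)) [IsProbabilityMeasure ν]
    (hν : Integrable (fun y => ‖y‖ ^ 2) ν) :
    Tendsto (fun n : ℕ => ∫ y, max (sqn y - n / 2) 0 ∂ν) atTop (nhds 0) := by
  have h : Tendsto (fun n : ℕ => ∫ y, max (sqn y - n / 2) 0 ∂ν) atTop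
      (nhds (∫ _, (0 : ℝ) ∂ν)) := by
    refine tendsto_integral_of_dominated_convergence sqn
      (fun n => ((continuous_sqn.sub continuous_const).max continuous_const).aestronglyMeasurable)
      (integrable_sqn hν) (fun n => Eventually.of_forall fun y => ?_)
      (Eventually.of_forall fun y => ?_)
    · rw [Real.norm_of_nonneg (le_max_right _ _)]
      refine max_le ?_ (sqn_nonneg y)
      have : (0 : ℝ) ≤ n := Nat.cast_nonneg n
      linarith
    · refine tendsto_const_nhds.congr' ?_
      obtain ⟨M, hM⟩ := exists_nat_ge (2 * sqn y)
      filter_upwards [eventually_ge_atTop M] with n hn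
      have : (M : ℝ) ≤ n := by exact_mod_cast hn
      exact (max_eq_right (by linarith)).symm
  simpa using h

lemma mem_growthSpace_of_fst_sub (f : BoundedContinuousFunction (Fin d → ℝ) ℝ) (i : Fin d) :
    (fun p : (Fin d → ℝ) × (Fin d → ℝ) => f p.1 * (p.2 i - p.1 i)) ∈ growthSpace (rr (d := d)) := by
  refine ⟨by fun_prop, ‖f‖, norm_nonneg _, fun p => ?_⟩
  rw [abs_mul]
  refine mul_le_mul (f.norm_coe_le_norm _) ?_ (abs_nonneg _) (norm_nonneg _)
  have h : ∀ x : Fin d → ℝ, |x i| ^ 2 ≤ sqn x := fun x =>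
    le_trans (by gcongr; exact norm_le_pi_norm x i) (norm_sq_le_sqn x)
  have h1 := abs_sub (p.2 i) (p.1 i)
  have h2 := h p.1
  have h3 := h p.2
  simp only [rr]
  nlinarith [sq_nonneg (|p.1 i| - 1), sq_nonneg (|p.2 i| - 1), sq_nonneg (|p.1 i|)]

lemma mem_growthSpace_coord (i : Fin d) :
    (fun p : (Fin d → ℝ) × (Fin d → ℝ) => p.1 i) ∈ growthSpace (rr (d := d)) ∧
    (fun p : (Fin d → ℝ) × (Fin d → ℝ) => p.2 i) ∈ growthSpace (rr (d := d)) := by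
  have h : ∀ x : Fin d → ℝ, |x i| ^ 2 ≤ sqn x := fun x =>
    le_trans (by gcongr; exact norm_le_pi_norm x i) (norm_sq_le_sqn x)
  refine ⟨⟨by fun_prop, 1, zero_le_one, fun p => ?_⟩, ⟨by fun_prop, 1, zero_le_one, fun p => ?_⟩⟩
  all_goals
    simp only [rr]
    nlinarith [sq_nonneg (|p.1 i| - 1), sq_nonneg (|p.2 i| - 1), h p.1, h p.2]

/-- Existence of an optimal martingale coupling for a cost of quadratic growth, together with
almost optimal dual certificates `f₀(x,y) ≤ φ(y) + ⟨v(x), y - x⟩`. -/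
lemma exists_plan (ν : Measure (Fin d → ℝ)) [IsProbabilityMeasure ν]
    (hν : Integrable (fun y => ‖y‖ ^ 2) ν) (f₀ : growthSpace (rr (d := d))) :
    ∃ γ, MGamma ν γ ∧ ∀ δ > 0, ∃ (φ : (Fin d → ℝ) → ℝ) (v : (Fin d → ℝ) → Fin d → ℝ),
      Integrable φ ν ∧ (∀ x y, f₀.1 (x, y) ≤ φ y + v x ⬝ᵥ (y - x)) ∧
        ∫ y, φ y ∂ν ≤ ∫ p, f₀.1 p ∂γ + δ := by
  obtain ⟨ℓ, hℓ, happ⟩ := exists_functional ν hν f₀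
  have hpos : ∀ f : growthSpace (rr (d := d)), (∀ p, 0 ≤ f.1 p) → 0 ≤ ℓ f := by
    intro f hf
    have h := hℓ (-f) (fun _ => 0) (fun _ => 0) (integrable_const _) fun x y => by
      simpa using hf (x, y)
    rw [map_neg, integral_zero] at h
    linarith
  have hone : (fun p => 1 + rr (d := d) p) ∈ growthSpace (rr (d := d)) :=
    ⟨continuous_const.add continuous_rr, 1, zero_le_one, fun p => by
      rw [one_mul, abs_of_nonneg (by linarith [rr_nonneg p])]⟩
  let tail : ℕ → growthSpace (rr (d := d)) := fun n => ⟨fun p => max (rr p - n) 0,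
    (continuous_rr.sub continuous_const).max continuous_const, 1, zero_le_one, fun p => by
      have := rr_nonneg p
      have hn : (0 : ℝ) ≤ n := Nat.cast_nonneg n
      rw [one_mul, abs_of_nonneg (le_max_right _ _)]
      exact max_le (by linarith) (by linarith)⟩
  have htail : ∀ n, ℓ (tail n) ≤ 2 * ∫ y, max (sqn y - n / 2) 0 ∂ν := by
    intro n
    rw [← integral_const_mul]
    refine hℓ (tail n) _ (fun x => if (n : ℝ) / 2 < sqn x then (-2 : ℝ) • x else 0) ?_ ?_
    · exact ((integrable_sqn hν).sub (integrable_const _)).pos_part.const_mul 2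
    · intro x y
      have h1 := sqn_sub_max_le ((n : ℝ) / 2) x y
      have h2 : (tail n).1 (x, y) ≤ max (sqn x - n / 2) 0 + max (sqn y - n / 2) 0 := by
        refine max_le ?_ (add_nonneg (le_max_right _ _) (le_max_right _ _))
        have h3 := le_max_left (sqn x - n / 2) 0
        have h4 := le_max_left (sqn y - n / 2) 0
        simp only [rr]
        linarith
      linarith
  have hlim : Tendsto (fun n => ℓ (tail n)) atTop (nhds 0) :=
    squeeze_zero (fun n => hpos _ fun p => le_max_right _ _) htail
      (by simpa using (tendsto_integral_sqn_tail ν hν).const_mul 2)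
  obtain ⟨γ, hγ⟩ := exists_measure_of_growth rr rr_nonneg continuous_rr isCompact_rr_le ℓ hpos
    tail (fun _ _ => rfl) hlim
  have hfin : IsFiniteMeasure γ := by
    have h1 : (fun _ => (1 : ℝ)) ∈ growthSpace (rr (d := d)) :=
      ⟨continuous_const, 1, zero_le_one, fun p => by
        rw [one_mul, abs_one]; linarith [rr_nonneg p]⟩
    exact (integrable_const_iff_isFiniteMeasure one_ne_zero).1 (hγ ⟨_, h1⟩).1
  have hsnd : γ.map Prod.snd = ν := by
    refine ext_of_forall_integral_eq_of_IsFiniteMeasure fun f => ?_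
    rw [integral_map measurable_snd.aemeasurable f.continuous.aestronglyMeasurable]
    have hmem : (fun p : (Fin d → ℝ) × (Fin d → ℝ) => f p.2) ∈ growthSpace (rr (d := d)) :=
      ⟨by fun_prop, ‖f‖, norm_nonneg _, fun p => (f.norm_coe_le_norm _).trans
        (le_mul_of_one_le_right (norm_nonneg _) (by linarith [rr_nonneg p]))⟩
    have h1 := (hγ ⟨_, hmem⟩).2
    have h2 := hℓ ⟨_, hmem⟩ f (fun _ => 0) (f.integrable ν) fun x y => by simp
    have h3 := hℓ (-⟨_, hmem⟩) (fun y => -f y) (fun _ => 0) (f.integrable ν).neg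
      fun x y => by simp
    rw [map_neg, integral_neg] at h3
    exact h1.trans (le_antisymm h2 (by linarith))
  have hprob : IsProbabilityMeasure γ := by
    constructor
    have h := congrArg (fun m => m univ) hsnd
    simpa [Measure.map_apply measurable_snd MeasurableSet.univ] using h
  refine ⟨γ, ⟨hprob, hsnd, ?_, ?_⟩, fun δ hδ => ?_⟩
  · refine (hγ ⟨_, hone⟩).1.mono' (by fun_prop) (Eventually.of_forall fun p => ?_)
    rw [Real.norm_of_nonneg (by positivity)]
    have h1 := norm_sq_le_sqn p.1
    have h2 := norm_sq_le_sqn p.2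
    simp only [rr]
    linarith
  · refine martProp_of_forall γ (fun i => (hγ ⟨_, (mem_growthSpace_coord i).1⟩).1)
      (fun i => (hγ ⟨_, (mem_growthSpace_coord i).2⟩).1) fun f i => ?_
    have hmem := mem_growthSpace_of_fst_sub f i
    have h1 := (hγ ⟨_, hmem⟩).2
    have h2 := hℓ ⟨_, hmem⟩ (fun _ => 0) (fun x => Pi.single i (f x)) (integrable_const _)
      fun x y => by simp [mul_sub]
    have h3 := hℓ (-⟨_, hmem⟩) (fun _ => 0) (fun x => Pi.single i (-f x)) (integrable_const _)
      fun x y => by simp [mul_sub]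
    rw [map_neg, integral_zero] at h3
    rw [integral_zero] at h2
    exact h1.trans (le_antisymm h2 (by linarith))
  · rw [(hγ f₀).2]
    exact happ δ hδ

end Existence

/-! ### Convex order and martingale couplings -/

section Couplings

variable {d : ℕ} {S : Matrix (Fin d) (Fin d) ℝ}

lemma exists_Sb_bound (S : Matrix (Fin d) (Fin d) ℝ) :
    ∃ C, 0 ≤ C ∧ ∀ x y, |Sb S x y| ≤ C * ‖x‖ * ‖y‖ := by
  refine ⟨∑ i, ∑ j, |S i j|, Finset.sum_nonneg fun i _ => Finset.sum_nonneg fun j _ =>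
    abs_nonneg _, fun x y => ?_⟩
  simp only [Sb, dotProduct, mulVec, Finset.mul_sum, Finset.sum_mul]
  refine (Finset.abs_sum_le_sum_abs _ _).trans (Finset.sum_le_sum fun i _ => ?_)
  refine (Finset.abs_sum_le_sum_abs _ _).trans (Finset.sum_le_sum fun j _ => ?_)
  rw [abs_mul, abs_mul]
  have h1 : |x i| ≤ ‖x‖ := norm_le_pi_norm x i
  have h2 : |y j| ≤ ‖y‖ := norm_le_pi_norm y j
  calc |x i| * (|S i j| * |y j|) ≤ ‖x‖ * (|S i j| * ‖y‖) := by gcongr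
    _ = |S i j| * ‖x‖ * ‖y‖ := by ring

/-- The form `S` as a continuous bilinear map. -/
def SbL (S : Matrix (Fin d) (Fin d) ℝ) : (Fin d → ℝ) →L[ℝ] (Fin d → ℝ) →L[ℝ] ℝ :=
  LinearMap.mkContinuous₂ (LinearMap.mk₂ ℝ (Sb S) Sb_add_left Sb_smul_left
    Sb_add_right Sb_smul_right) (exists_Sb_bound S).choose
    fun x y => (exists_Sb_bound S).choose_spec.2 x y

lemma SbL_apply (x y : Fin d → ℝ) : SbL S x y = Sb S x y := rfl

lemma integrable_of_quadratic {μ : Measure (Fin d → ℝ)} [IsFiniteMeasure μ]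
    (hμ : Integrable (fun x => ‖x‖ ^ 2) μ) {f : (Fin d → ℝ) → ℝ} (hf : Continuous f) (C : ℝ)
    (hC : ∀ x, |f x| ≤ C * (1 + ‖x‖ ^ 2)) : Integrable f μ :=
  (((integrable_const 1).add hμ).const_mul C).mono' hf.aestronglyMeasurable
    (Eventually.of_forall hC)

lemma integrable_qf {μ : Measure (Fin d → ℝ)} [IsFiniteMeasure μ]
    (hμ : Integrable (fun x => ‖x‖ ^ 2) μ) : Integrable (qf S) μ := by
  obtain ⟨C, hC, h⟩ := exists_Sb_bound S
  refine integrable_of_quadratic hμ continuous_qf C fun x => ?_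
  have h1 := h x x
  have h3 : 0 ≤ |Sb S x x| := abs_nonneg _
  rw [qf, abs_div, abs_of_pos (two_pos : (0 : ℝ) < 2)]
  nlinarith

lemma continuous_ell_right (x : Fin d → ℝ) : Continuous (ell S x) :=
  continuous_ell.comp (continuous_const.prodMk continuous_id)

lemma exists_ell_bound (x : Fin d → ℝ) : ∃ C, 0 ≤ C ∧ ∀ y, |ell S x y| ≤ C * (1 + ‖y‖) := by
  obtain ⟨C, hC, h⟩ := exists_Sb_bound S
  refine ⟨C * ‖x‖ + |Sb S x x / 2|, by positivity, fun y => ?_⟩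
  have h1 := h x y
  have h2 := abs_sub (Sb S x y) (Sb S x x / 2)
  have h3 : 0 ≤ C * ‖x‖ := by positivity
  have h4 : 0 ≤ |Sb S x x / 2| * ‖y‖ := by positivity
  unfold ell
  nlinarith

lemma integrable_ell {μ : Measure (Fin d → ℝ)} [IsFiniteMeasure μ]
    (hμ : Integrable (fun x => ‖x‖ ^ 2) μ) (x : Fin d → ℝ) : Integrable (ell S x) μ := by
  obtain ⟨C, hC, h⟩ := exists_ell_bound (S := S) x
  refine integrable_of_quadratic hμ (continuous_ell_right x) (2 * C) fun y => (h y).trans ?_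
  nlinarith [mul_nonneg hC (sq_nonneg (‖y‖ - 1)), mul_nonneg hC (sq_nonneg ‖y‖)]

lemma integrable_ell_sq {μ : Measure (Fin d → ℝ)} [IsFiniteMeasure μ]
    (hμ : Integrable (fun x => ‖x‖ ^ 2) μ) (x : Fin d → ℝ) :
    Integrable (fun y => ell S x y ^ 2) μ := by
  obtain ⟨C, hC, h⟩ := exists_ell_bound (S := S) x
  refine integrable_of_quadratic hμ ((continuous_ell_right x).pow 2) (2 * C ^ 2) fun y => ?_
  rw [abs_pow]
  calc |ell S x y| ^ 2 ≤ (C * (1 + ‖y‖)) ^ 2 := by gcongr; exact h y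
    _ ≤ _ := by nlinarith [mul_nonneg (sq_nonneg C) (sq_nonneg (‖y‖ - 1))]

lemma ell_comb (x y z : Fin d → ℝ) (a b : ℝ) (hab : a + b = 1) :
    ell S x (a • y + b • z) = a * ell S x y + b * ell S x z := by
  simp only [ell, Sb_add_right, Sb_smul_right]
  obtain rfl : b = 1 - a := by linarith
  ring

lemma convexOn_ell (x : Fin d → ℝ) : ConvexOn ℝ univ (ell S x) :=
  ⟨convex_univ, fun y _ z _ a b _ _ hab => (ell_comb x y z a b hab).le⟩

/-- The marginals of a martingale coupling are in convex order (conditional Jensen). -/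
lemma convFeasible_of_MGamma {ν : Measure (Fin d → ℝ)}
    {γ : Measure ((Fin d → ℝ) × (Fin d → ℝ))} (hγ : MGamma ν γ) :
    ConvFeasible ν (γ.map Prod.fst) := by
  obtain ⟨hprob, hsnd, hInteg, hmart⟩ := hγ
  have hi1 : Integrable (fun p : (Fin d → ℝ) × (Fin d → ℝ) => ‖p.1‖ ^ 2) γ :=
    hInteg.mono' (by fun_prop) (Eventually.of_forall fun p => by
      rw [Real.norm_of_nonneg (by positivity)]
      linarith [sq_nonneg ‖p.2‖])
  have hi2 : Integrable (fun p : (Fin d → ℝ) × (Fin d → ℝ) => p.2) γ :=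
    ((integrable_const 1).add hInteg).mono' (by fun_prop) (Eventually.of_forall fun p => by
      simp only [Pi.add_apply]
      nlinarith [sq_nonneg ‖p.1‖, sq_nonneg (‖p.2‖ - 1), sq_nonneg ‖p.2‖])
  refine ⟨Measure.isProbabilityMeasure_map measurable_fst.aemeasurable, ?_, ?_⟩
  · rw [integrable_map_measure (by fun_prop) measurable_fst.aemeasurable]
    exact hi1
  intro f hf hf0
  have hfc : Continuous f := by
    rw [← continuousOn_univ]; exact hf.continuousOn isOpen_univ
  rw [lintegral_map (by fun_prop) measurable_fst, ← hsnd,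
    lintegral_map (by fun_prop) measurable_snd]
  by_cases htop : ∫⁻ p, ENNReal.ofReal (f p.2) ∂γ = ⊤
  · rw [htop]; exact le_top
  have hfint : Integrable (f ∘ fun p : (Fin d → ℝ) × (Fin d → ℝ) => p.2) γ := by
    refine ⟨(hfc.comp continuous_snd).aestronglyMeasurable, ?_⟩
    change HasFiniteIntegral (fun p : (Fin d → ℝ) × (Fin d → ℝ) => f p.2) γ
    rw [hasFiniteIntegral_iff_ofReal (Eventually.of_forall fun p => hf0 _)]
    exact lt_top_iff_ne_top.2 htop
  have hm : MeasurableSpace.comap (Prod.fst : (Fin d → ℝ) × (Fin d → ℝ) → _) inferInstance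
      ≤ (inferInstance : MeasurableSpace ((Fin d → ℝ) × (Fin d → ℝ))) :=
    measurable_fst.comap_le
  have hJ := hf.map_condExp_le hm (hfc.lowerSemicontinuous.lowerSemicontinuousOn univ)
    (Eventually.of_forall fun p => mem_univ _) isClosed_univ hi2 hfint
  have hle : (fun p : (Fin d → ℝ) × (Fin d → ℝ) => f p.1) ≤ᵐ[γ]
      γ[f ∘ (fun p => p.2) | MeasurableSpace.comap Prod.fst inferInstance] := by
    filter_upwards [hJ, hmart] with p h1 h2
    rw [Function.comp_apply, h2] at h1
    exact h1
  calc ∫⁻ p, ENNReal.ofReal (f p.1) ∂γ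
      ≤ ∫⁻ p, ENNReal.ofReal
        ((γ[f ∘ (fun p => p.2) | MeasurableSpace.comap Prod.fst inferInstance]) p) ∂γ :=
        lintegral_mono_ae (hle.mono fun p h => ENNReal.ofReal_le_ofReal h)
    _ = ENNReal.ofReal
        (∫ p, (γ[f ∘ (fun p => p.2) | MeasurableSpace.comap Prod.fst inferInstance]) p ∂γ) := by
        rw [ofReal_integral_eq_lintegral_ofReal integrable_condExp]
        exact hle.mono fun p h => (hf0 _).trans h
    _ = ENNReal.ofReal (∫ p, f p.2 ∂γ) := by rw [integral_condExp hm]; rfl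
    _ = ∫⁻ p, ENNReal.ofReal (f p.2) ∂γ :=
        ofReal_integral_eq_lintegral_ofReal hfint (Eventually.of_forall fun p => hf0 _)

lemma integrable_Sb_of_MGamma {ν : Measure (Fin d → ℝ)}
    {γ : Measure ((Fin d → ℝ) × (Fin d → ℝ))} (hγ : MGamma ν γ) :
    Integrable (fun p => Sb S p.1 p.2) γ ∧ Integrable (fun p => Sb S p.1 p.1) γ := by
  obtain ⟨C, hC, h⟩ := exists_Sb_bound S
  constructor
  · refine (hγ.2.2.1.const_mul C).mono' continuous_Sb.aestronglyMeasurable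
      (Eventually.of_forall fun p => (h p.1 p.2).trans ?_)
    rw [mul_assoc]
    refine mul_le_mul_of_nonneg_left ?_ hC
    nlinarith [sq_nonneg (‖p.1‖ - ‖p.2‖), sq_nonneg ‖p.1‖, sq_nonneg ‖p.2‖]
  · refine (hγ.2.2.1.const_mul C).mono'
      (continuous_Sb.comp (continuous_fst.prodMk continuous_fst)).aestronglyMeasurable
      (Eventually.of_forall fun p => (h p.1 p.1).trans ?_)
    rw [mul_assoc]
    refine mul_le_mul_of_nonneg_left ?_ hC
    nlinarith [sq_nonneg ‖p.2‖]

lemma integral_Sb_of_MGamma {ν : Measure (Fin d → ℝ)}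
    {γ : Measure ((Fin d → ℝ) × (Fin d → ℝ))} (hγ : MGamma ν γ) :
    ∫ p, Sb S p.1 p.2 ∂γ = ∫ p, Sb S p.1 p.1 ∂γ := by
  have hInteg := (integrable_Sb_of_MGamma (S := S) hγ).1
  obtain ⟨hprob, hsnd, hint2, hmart⟩ := hγ
  have hi2 : Integrable (fun p : (Fin d → ℝ) × (Fin d → ℝ) => p.2) γ :=
    ((integrable_const 1).add hint2).mono' (by fun_prop) (Eventually.of_forall fun p => by
      simp only [Pi.add_apply]
      nlinarith [sq_nonneg ‖p.1‖, sq_nonneg (‖p.2‖ - 1), sq_nonneg ‖p.2‖])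
  have hm : MeasurableSpace.comap (Prod.fst : (Fin d → ℝ) × (Fin d → ℝ) → _) inferInstance
      ≤ (inferInstance : MeasurableSpace ((Fin d → ℝ) × (Fin d → ℝ))) :=
    measurable_fst.comap_le
  have h := condExp_bilin_of_aestronglyMeasurable_left (SbL S)
    (m := MeasurableSpace.comap (Prod.fst : (Fin d → ℝ) × (Fin d → ℝ) → _) inferInstance)
    (f := fun p : (Fin d → ℝ) × (Fin d → ℝ) => p.1) (g := fun p => p.2) (μ := γ)
    (Measurable.aestronglyMeasurable (comap_measurable _)) hInteg hi2
  rw [← integral_condExp hm]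
  refine integral_congr_ae ?_
  filter_upwards [h, hmart] with p h1 h2
  rw [h2] at h1
  exact h1

lemma primalVal_eq {ν : Measure (Fin d → ℝ)}
    {γ : Measure ((Fin d → ℝ) × (Fin d → ℝ))} (hγ : MGamma ν γ) :
    primalVal S γ = relaxedVal S (γ.map Prod.fst) := by
  rw [primalVal, relaxedVal, integral_Sb_of_MGamma hγ, integral_map measurable_fst.aemeasurable]
  exact (continuous_Sb.comp (continuous_id.prodMk continuous_id)).aestronglyMeasurable

lemma relaxedVal_eq (μ : Measure (Fin d → ℝ)) : relaxedVal S μ = ∫ x, qf S x ∂μ := by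
  rw [relaxedVal, ← integral_const_mul]
  refine integral_congr_ae (Eventually.of_forall fun x => ?_)
  simp only [qf]
  ring

lemma integral_ell_of_MGamma {ν : Measure (Fin d → ℝ)}
    {γ : Measure ((Fin d → ℝ) × (Fin d → ℝ))} (hγ : MGamma ν γ) :
    ∫ p, ell S p.1 p.2 ∂γ = relaxedVal S (γ.map Prod.fst) := by
  obtain ⟨h1, h2⟩ := integrable_Sb_of_MGamma (S := S) hγ
  rw [← primalVal_eq hγ, primalVal]
  simp only [ell]
  rw [integral_sub h1 (h2.div_const 2), integral_div, ← integral_Sb_of_MGamma hγ]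
  ring

/-- Measures in convex order integrate affine functions equally: test against the convex
functions `(1 + c ℓ)²` and let `c → 0`. -/
lemma integral_ell_eq {μ ν : Measure (Fin d → ℝ)} [IsProbabilityMeasure ν]
    (hν : Integrable (fun y => ‖y‖ ^ 2) ν) (hμ : ConvFeasible ν μ) (x : Fin d → ℝ) :
    ∫ y, ell S x y ∂μ = ∫ y, ell S x y ∂ν := by
  obtain ⟨hprob, hμ2, hord⟩ := hμ
  set a := ∫ y, ell S x y ∂μ
  set b := ∫ y, ell S x y ∂ν
  set a2 := ∫ y, ell S x y ^ 2 ∂μ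
  set b2 := ∫ y, ell S x y ^ 2 ∂ν
  have hInteg : ∀ (m : Measure (Fin d → ℝ)) [IsProbabilityMeasure m],
      Integrable (fun y => ‖y‖ ^ 2) m → ∀ c : ℝ,
      Integrable (fun y => (1 + c * ell S x y) ^ 2) m ∧
      ∫ y, (1 + c * ell S x y) ^ 2 ∂m
        = 1 + 2 * c * ∫ y, ell S x y ∂m + c ^ 2 * ∫ y, ell S x y ^ 2 ∂m := by
    intro m _ hm c
    have h1 := (integrable_ell (S := S) hm x).const_mul (2 * c)
    have h2 := (integrable_ell_sq (S := S) hm x).const_mul (c ^ 2)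
    have heq : (fun y => (1 + c * ell S x y) ^ 2)
        = fun y => 1 + 2 * c * ell S x y + c ^ 2 * ell S x y ^ 2 := by
      funext y; ring
    rw [heq]
    refine ⟨((integrable_const 1).add h1).add h2, ?_⟩
    have h3 : Integrable (fun y => 1 + 2 * c * ell S x y) m := (integrable_const 1).add h1
    rw [integral_add h3 h2, integral_add (integrable_const 1) h1, integral_const_mul,
      integral_const_mul]
    simp
  have key : ∀ c : ℝ, 2 * c * a + c ^ 2 * a2 ≤ 2 * c * b + c ^ 2 * b2 := by
    intro c
    have hconv : ConvexOn ℝ univ fun y => (1 + c * ell S x y) ^ 2 := by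
      refine ⟨convex_univ, fun y _ z _ r s hr hs hrs => ?_⟩
      simp only [smul_eq_mul]
      rw [ell_comb x y z r s hrs]
      obtain rfl : s = 1 - r := by linarith
      nlinarith [mul_nonneg (mul_nonneg hr hs) (sq_nonneg (c * ell S x y - c * ell S x z))]
    have h := hord _ hconv fun y => sq_nonneg _
    obtain ⟨h1, h2⟩ := hInteg μ hμ2 c
    obtain ⟨h3, h4⟩ := hInteg ν hν c
    rw [← ofReal_integral_eq_lintegral_ofReal h1 (Eventually.of_forall fun y => sq_nonneg _),
      ← ofReal_integral_eq_lintegral_ofReal h3 (Eventually.of_forall fun y => sq_nonneg _),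
      ENNReal.ofReal_le_ofReal_iff (integral_nonneg fun y => sq_nonneg _), h2, h4] at h
    linarith
  have hpos : 0 < |b2 - a2| + 1 := by positivity
  have h := key ((a - b) / (|b2 - a2| + 1))
  have h2 : ((a - b) / (|b2 - a2| + 1)) ^ 2 * (b2 - a2)
      ≤ (a - b) ^ 2 / (|b2 - a2| + 1) := by
    rw [div_pow, div_mul_eq_mul_div, div_le_div_iff₀ (by positivity) hpos]
    have h3 := le_abs_self (b2 - a2)
    have h4 : (b2 - a2) * (|b2 - a2| + 1) ≤ (|b2 - a2| + 1) ^ 2 := by nlinarith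
    nlinarith [mul_le_mul_of_nonneg_left h4 (sq_nonneg (a - b))]
  have h3 : 2 * ((a - b) / (|b2 - a2| + 1)) * (a - b)
      = 2 * ((a - b) ^ 2 / (|b2 - a2| + 1)) := by ring
  have h4 : (a - b) ^ 2 / (|b2 - a2| + 1) ≤ 0 := by nlinarith
  rw [div_le_iff₀ hpos, zero_mul] at h4
  have h5 : a - b = 0 := by nlinarith [sq_nonneg (a - b), pow_eq_zero_iff (two_ne_zero) (a := a - b)]
  linarith

end Couplings

/-! ### Weak duality -/

section WeakDuality

lemma epos_coe (r : ℝ) : epos (r : EReal) = ENNReal.ofReal r := by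
  simp [epos]

lemma epos_eq_toENNReal : epos = EReal.toENNReal := rfl

lemma epos_mono : Monotone epos := fun _ _ h => EReal.toENNReal_le_toENNReal h

lemma measurable_epos : Measurable epos := measurable_ereal_toENNReal

lemma continuous_epos : Continuous epos := EReal.continuous_toENNReal

/-- An integrable minorant `g` makes the signed integral of `ψ` meaningful. -/
lemma eInt_eq_add {α : Type*} [MeasurableSpace α] {ν : Measure α} {ψ : α → EReal}
    (hψ : Measurable ψ) {g : α → ℝ} (hg : Integrable g ν) (hle : ∀ y, (g y : EReal) ≤ ψ y) :
    eInt ν ψ = ((∫⁻ y, epos (ψ y - g y) ∂ν : ENNReal) : EReal) + ((∫ y, g y ∂ν : ℝ) : EReal) := by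
  have hpt : ∀ y, epos (ψ y) + ENNReal.ofReal (-g y)
      = epos (-ψ y) + epos (ψ y - g y) + ENNReal.ofReal (g y) := by
    intro y
    have h := hle y
    induction hψy : ψ y with
    | bot => rw [hψy] at h; simp at h
    | top => simp [epos]
    | coe r =>
      rw [hψy, EReal.coe_le_coe_iff] at h
      rw [← EReal.coe_neg, ← EReal.coe_sub, epos_coe, epos_coe, epos_coe]
      rcases le_total 0 r with h1 | h1 <;> rcases le_total 0 (g y) with h2 | h2
      · rw [ENNReal.ofReal_of_nonpos (p := -g y) (by linarith),
          ENNReal.ofReal_of_nonpos (p := -r) (by linarith), zero_add, add_zero,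
          ← ENNReal.ofReal_add (by linarith) h2]
        congr 1; ring
      · rw [ENNReal.ofReal_of_nonpos (p := g y) (by linarith),
          ENNReal.ofReal_of_nonpos (p := -r) (by linarith), zero_add, add_zero,
          ← ENNReal.ofReal_add h1 (by linarith)]
        congr 1
      · obtain rfl : r = 0 := by linarith
        have : g y = 0 := by linarith
        simp [this]
      · rw [ENNReal.ofReal_of_nonpos (p := g y) (by linarith),
          ENNReal.ofReal_of_nonpos (p := r) (by linarith), zero_add, add_zero,
          ← ENNReal.ofReal_add (by linarith) (by linarith)]
        congr 1; ring
  have hsum : (∫⁻ y, epos (ψ y) ∂ν) + ∫⁻ y, ENNReal.ofReal (-g y) ∂ν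
      = (∫⁻ y, epos (-ψ y) ∂ν) + (∫⁻ y, epos (ψ y - g y) ∂ν)
        + ∫⁻ y, ENNReal.ofReal (g y) ∂ν := by
    have hgm : AEMeasurable g ν := hg.aemeasurable
    rw [← lintegral_add_left (f := fun y => epos (ψ y)) (measurable_epos.comp hψ),
      ← lintegral_add_left (f := fun y => epos (-ψ y)) (measurable_epos.comp hψ.neg), ← lintegral_add_right' _ hgm.ennreal_ofReal]
    exact lintegral_congr hpt
  have hP : ∫⁻ y, ENNReal.ofReal (g y) ∂ν ≠ ⊤ := hg.lintegral_lt_top.ne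
  have hN : ∫⁻ y, ENNReal.ofReal (-g y) ∂ν ≠ ⊤ := hg.neg.lintegral_lt_top.ne
  have hB : ∫⁻ y, epos (-ψ y) ∂ν ≠ ⊤ := by
    refine ne_top_of_le_ne_top hN (lintegral_mono fun y => ?_)
    rw [← epos_coe, EReal.coe_neg]
    exact epos_mono (EReal.neg_le_neg_iff.2 (hle y))
  have hInteg : ∫ y, g y ∂ν = (∫⁻ y, ENNReal.ofReal (g y) ∂ν).toReal
      - (∫⁻ y, ENNReal.ofReal (-g y) ∂ν).toReal := integral_eq_lintegral_pos_part_sub_lintegral_neg_part hg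
  rw [eInt, hInteg]
  generalize (∫⁻ y, epos (ψ y) ∂ν) = A at *
  generalize (∫⁻ y, epos (-ψ y) ∂ν) = B at *
  generalize (∫⁻ y, epos (ψ y - g y) ∂ν) = D at *
  generalize (∫⁻ y, ENNReal.ofReal (g y) ∂ν) = P at *
  generalize (∫⁻ y, ENNReal.ofReal (-g y) ∂ν) = N at *
  lift P to NNReal using hP
  lift N to NNReal using hN
  lift B to NNReal using hB
  by_cases hD : D = ⊤
  · subst hD
    have hA : A = ⊤ := by simpa using hsum
    subst hA
    have h1 : ((B : ENNReal) : EReal) = ((B : ℝ) : EReal) := rfl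
    rw [h1, EReal.coe_ennreal_top, EReal.top_sub_coe, EReal.top_add_coe]
  · lift D to NNReal using hD
    have hA : A ≠ ⊤ := by
      rintro rfl
      rw [top_add] at hsum
      exact absurd hsum.symm (by simp)
    lift A to NNReal using hA
    have h2 : (A : ℝ) + N = B + D + P := by exact_mod_cast hsum
    have h1 : ∀ C : NNReal, ((C : ENNReal) : EReal) = ((C : ℝ) : EReal) := fun _ => rfl
    rw [h1, h1, h1, ← EReal.coe_sub, ← EReal.coe_add]
    congr 1
    simp only [ENNReal.coe_toReal]
    linarith

variable {d : ℕ} {S : Matrix (Fin d) (Fin d) ℝ}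

lemma ell_le_fitz {H : Set (Fin d → ℝ)} {x : Fin d → ℝ} (hx : x ∈ H) (y : Fin d → ℝ) :
    ((ell S x y : ℝ) : EReal) ≤ fitz S H y :=
  le_iSup₂ (f := fun x (_ : x ∈ H) => ((Sb S x y - Sb S x x / 2 : ℝ) : EReal)) x hx

lemma fitz_le_iff {H : Set (Fin d → ℝ)} {y : Fin d → ℝ} {c : EReal} :
    fitz S H y ≤ c ↔ ∀ x ∈ H, ((ell S x y : ℝ) : EReal) ≤ c := iSup₂_le_iff

lemma qf_neg (x : Fin d → ℝ) : qf S (-x) = qf S x := by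
  rw [qf, qf, Sb_neg_left, Sb_neg_right, neg_neg]

lemma MaxSMono.mem_of_forall {H : Set (Fin d → ℝ)} (hH : MaxSMono S H) {y : Fin d → ℝ}
    (h : ∀ x ∈ H, 0 ≤ qf S (y - x)) : y ∈ H := by
  have h' : ∀ x ∈ H, 0 ≤ Sb S (y - x) (y - x) := fun x hx => by
    have := h x hx; rw [qf] at this; linarith
  have := hH.2 (insert y H) ?_ (subset_insert y H)
  · rw [← this]; exact mem_insert y H
  rintro a (rfl | ha) b (rfl | hb)
  · simp [Sb]
  · exact h' b hb
  · rw [← neg_sub, Sb_neg_left, Sb_neg_right, neg_neg]; exact h' a ha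
  · exact hH.1 a ha b hb

lemma MaxSMono.nonempty {H : Set (Fin d → ℝ)} (hH : MaxSMono S H) : H.Nonempty := by
  by_contra h
  rw [not_nonempty_iff_eq_empty] at h
  have : (0 : Fin d → ℝ) ∈ H := hH.mem_of_forall (by simp [h])
  simp [h] at this

lemma MaxSMono.isClosed {H : Set (Fin d → ℝ)} (hH : MaxSMono S H) : IsClosed H := by
  have : H = ⋂ x ∈ H, {y | 0 ≤ qf S (y - x)} := by
    refine Subset.antisymm (fun y hy => mem_iInter₂.2 fun x hx => ?_) fun y hy =>
      hH.mem_of_forall fun x hx => mem_iInter₂.1 hy x hx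
    have := hH.1 y hy x hx
    simp only [mem_ofPred_eq, qf]; linarith
  rw [this]
  exact isClosed_biInter fun x _ =>
    isClosed_le continuous_const (continuous_qf.comp (continuous_id.sub continuous_const))

lemma MaxSMono.mem_of_fitz_le (hS : S.IsHermitian) {H : Set (Fin d → ℝ)} (hH : MaxSMono S H)
    {y : Fin d → ℝ} (h : fitz S H y ≤ (qf S y : ℝ)) : y ∈ H := by
  refine hH.mem_of_forall fun x hx => ?_
  have := fitz_le_iff.1 h x hx
  rw [EReal.coe_le_coe_iff, ell_eq hS] at this
  linarith

lemma MaxSMono.qf_le_fitz (hS : S.IsHermitian) {H : Set (Fin d → ℝ)} (hH : MaxSMono S H)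
    (y : Fin d → ℝ) : ((qf S y : ℝ) : EReal) ≤ fitz S H y := by
  by_contra! h
  have hy := hH.mem_of_fitz_le hS h.le
  have := ell_le_fitz (S := S) hy y
  rw [ell_eq hS, sub_self] at this
  simp only [qf, Sb, zero_dotProduct, zero_div, sub_zero] at this h
  exact absurd this (not_le.2 h)

/-- The Fitzpatrick function of a nonempty set is an increasing limit of finite maxima of the
affine functions `ell S x`. -/
lemma exists_seq_fitz {H : Set (Fin d → ℝ)} (hH : H.Nonempty) :
    ∃ f : ℕ → (Fin d → ℝ) → ℝ, Monotone f ∧ (∀ n, ConvexOn ℝ univ (f n)) ∧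
      (∀ n, Continuous (f n)) ∧ (∃ x ∈ H, f 0 = ell S x) ∧
      ∀ y, fitz S H y = ⨆ n, ((f n y : ℝ) : EReal) := by
  have : Nonempty H := hH.to_subtype
  set u : ℕ → H := TopologicalSpace.denseSeq H
  set F : ℕ → (Fin d → ℝ) → ℝ := fun n => ell S (u n : Fin d → ℝ)
  refine ⟨fun n => partialSups F n, (partialSups F).monotone, fun n => ?_, fun n => ?_,
    ⟨u 0, (u 0).2, partialSups_zero F⟩, fun y => le_antisymm ?_ (iSup_le fun n => ?_)⟩
  · induction n with
    | zero => beta_reduce; rw [partialSups_zero]; exact convexOn_ell _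
    | succ n ih => beta_reduce; rw [partialSups_add_one]; exact ih.sup (convexOn_ell _)
  · induction n with
    | zero => beta_reduce; rw [partialSups_zero]; exact continuous_ell_right _
    | succ n ih => beta_reduce; rw [partialSups_add_one]; exact ih.sup (continuous_ell_right _)
  · refine fitz_le_iff.2 fun x hx => EReal.ge_of_forall_gt_iff_ge.1 fun c hc => ?_
    obtain ⟨n, hn⟩ := (TopologicalSpace.denseRange_denseSeq H).exists_mem_open
      (isOpen_lt (continuous_const (y := c)) ((continuous_ell (S := S)).comp
        ((continuous_subtype_val (p := (· ∈ H))).prodMk (continuous_const (y := y)))))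
      ⟨⟨x, hx⟩, by exact_mod_cast hc⟩
    refine le_trans ?_ (le_iSup _ n)
    exact_mod_cast (le_of_lt hn).trans (le_partialSups F n y)
  · induction n with
    | zero => beta_reduce; rw [partialSups_zero]; exact ell_le_fitz (u 0).2 y
    | succ n ih =>
      beta_reduce
      rw [partialSups_add_one, Pi.sup_apply, EReal.coe_strictMono.monotone.map_sup]
      exact sup_le ih (ell_le_fitz (u (n + 1)).2 y)

lemma measurable_fitz {H : Set (Fin d → ℝ)} (hH : H.Nonempty) : Measurable (fitz S H) := by
  obtain ⟨f, -, -, hc, -, hf⟩ := exists_seq_fitz (S := S) hH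
  rw [funext hf]
  exact Measurable.iSup fun n => measurable_coe_real_ereal.comp (hc n).measurable

/-- The integral of a Fitzpatrick function increases along the convex order. -/
lemma eInt_fitz_mono {ν μ : Measure (Fin d → ℝ)} [IsProbabilityMeasure ν]
    (hν : Integrable (fun y => ‖y‖ ^ 2) ν) (hμ : ConvFeasible ν μ) {H : Set (Fin d → ℝ)}
    (hH : H.Nonempty) : eInt μ (fitz S H) ≤ eInt ν (fitz S H) := by
  have := hμ.1
  obtain ⟨f, hmono, hconv, hcont, ⟨x, hx, hx0⟩, hf⟩ := exists_seq_fitz (S := S) hH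
  have hm := measurable_fitz (S := S) hH
  rw [eInt_eq_add hm (integrable_ell hμ.2.1 x) (ell_le_fitz hx),
    eInt_eq_add hm (integrable_ell hν x) (ell_le_fitz hx), integral_ell_eq hν hμ x]
  refine add_le_add_left (EReal.coe_ennreal_le_coe_ennreal_iff.2 ?_) _
  have hrep : ∀ y, epos (fitz S H y - (ell S x y : ℝ))
      = ⨆ n, ENNReal.ofReal (f n y - ell S x y) := by
    intro y
    have hF : Continuous fun t : EReal => epos (t - (ell S x y : ℝ)) := by
      refine continuous_epos.comp (continuous_iff_continuousAt.2 fun t => ?_)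
      simp only [sub_eq_add_neg, ← EReal.coe_neg]
      exact (EReal.continuousAt_add (p := (t, ((-ell S x y : ℝ) : EReal))) (by simp)
        (by simp)).comp (f := fun t : EReal => (t, ((-ell S x y : ℝ) : EReal)))
        (by fun_prop)
    have hM : Monotone fun t : EReal => epos (t - (ell S x y : ℝ)) :=
      fun a b hab => epos_mono (EReal.sub_le_sub hab le_rfl)
    rw [hf y]
    refine (Monotone.map_ciSup_of_continuousAt hF.continuousAt hM).trans ?_
    refine iSup_congr fun n => ?_
    rw [← EReal.coe_sub, epos_coe]
  simp only [hrep]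
  have hmeas : ∀ n, Measurable fun y => ENNReal.ofReal (f n y - ell S x y) := fun n =>
    ((hcont n).sub (continuous_ell_right x)).measurable.ennreal_ofReal
  have hmn : Monotone fun n y => ENNReal.ofReal (f n y - ell S x y) := fun n k hnk y =>
    ENNReal.ofReal_le_ofReal (sub_le_sub_right (hmono hnk y) _)
  rw [lintegral_iSup hmeas hmn, lintegral_iSup hmeas hmn]
  refine iSup_mono fun n => hμ.2.2 (fun y => f n y - ell S x y) ?_ fun y => ?_
  · refine ⟨convex_univ, fun y _ z _ a b ha hb hab => ?_⟩
    have h1 := (hconv n).2 (mem_univ y) (mem_univ z) ha hb hab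
    simp only [smul_eq_mul] at h1 ⊢
    rw [ell_comb x y z a b hab]
    linarith
  · have := hmono (Nat.zero_le n) y
    rw [hx0] at this
    exact sub_nonneg.2 this

/-- Weak duality, with its equality case. -/
lemma weak_duality (hS : S.IsHermitian) {ν μ : Measure (Fin d → ℝ)} [IsProbabilityMeasure ν]
    (hν : Integrable (fun y => ‖y‖ ^ 2) ν) (hμ : ConvFeasible ν μ) {H : Set (Fin d → ℝ)}
    (hH : MaxSMono S H) : ((relaxedVal S μ : ℝ) : EReal) ≤ eInt ν (fitz S H) ∧
      (eInt ν (fitz S H) = ((relaxedVal S μ : ℝ) : EReal) → msupp μ ⊆ H) := by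
  have := hμ.1
  have hmono := eInt_fitz_mono (S := S) hν hμ hH.nonempty
  have hm := measurable_fitz (S := S) hH.nonempty
  have heq := eInt_eq_add hm (integrable_qf (S := S) hμ.2.1) (hH.qf_le_fitz hS)
  rw [← relaxedVal_eq] at heq
  constructor
  · refine le_trans ?_ hmono
    rw [heq]
    exact le_add_of_nonneg_left (EReal.coe_ennreal_nonneg _)
  intro h
  rw [h, heq] at hmono
  have hz : ∫⁻ y, epos (fitz S H y - (qf S y : ℝ)) ∂μ = 0 := by
    generalize (∫⁻ y, epos (fitz S H y - (qf S y : ℝ)) ∂μ) = D at hmono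
    by_cases hD : D = ⊤
    · subst hD
      rw [EReal.coe_ennreal_top, EReal.top_add_coe] at hmono
      exact absurd hmono (by simp)
    lift D to NNReal using hD
    have h1 : ((D : ENNReal) : EReal) = ((D : ℝ) : EReal) := rfl
    rw [h1, ← EReal.coe_add, EReal.coe_le_coe_iff] at hmono
    have h2 : (D : ℝ) ≤ 0 := by linarith
    have h3 : D = 0 := le_antisymm (by exact_mod_cast h2) zero_le
    simp [h3]
  rw [lintegral_eq_zero_iff (f := fun y => epos (fitz S H y - (qf S y : ℝ))) (measurable_epos.comp
    (hm.sub (measurable_coe_real_ereal.comp continuous_qf.measurable)))] at hz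
  have hae : ∀ᵐ y ∂μ, y ∈ H := by
    filter_upwards [hz] with y hy
    refine hH.mem_of_fitz_le hS ?_
    have : fitz S H y - (qf S y : ℝ) ≤ 0 := EReal.toENNReal_eq_zero_iff.1 hy
    by_contra! hlt
    exact absurd this (not_le.2 (EReal.sub_pos.2 hlt))
  intro x hx
  by_contra hxH
  exact hx Hᶜ (hH.isClosed.isOpen_compl.mem_nhds hxH) hae

end WeakDuality

/-! ### Attainment in the dual problem -/

section DualAttainment

open scoped Topology

variable {d : ℕ} {S : Matrix (Fin d) (Fin d) ℝ}

lemma integral_ell_mean {ν : Measure (Fin d → ℝ)} [IsProbabilityMeasure ν]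
    (hν : Integrable (fun y => ‖y‖ ^ 2) ν) (x : Fin d → ℝ) :
    ∫ y, ell S x y ∂ν = ell S x (∫ y, y ∂ν) := by
  have hid : Integrable (fun y : Fin d → ℝ => y) ν :=
    ((integrable_const 1).add hν).mono' (by fun_prop) (Eventually.of_forall fun y => by
      simp only [Pi.add_apply]
      nlinarith [sq_nonneg (‖y‖ - 1), sq_nonneg ‖y‖])
  have h := (SbL S x).integral_comp_comm hid
  simp only [SbL_apply] at h
  have h2 : Integrable (fun y => Sb S x y) ν := (SbL S x).integrable_comp hid
  simp only [ell]
  rw [integral_sub h2 (integrable_const _), h]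
  simp

/-- An optimal coupling together with monotone sets whose Fitzpatrick functions have almost
minimal integral: the certificate `(φ, v)` is replaced by the convex function
`y ↦ sup_x (ℓ_x(y) - ⟨v(x), y - x⟩)`, which lies between `q` and `φ`. -/
lemma exists_plan_mono (hS : S.IsHermitian)
    (T : (Fin d → ℝ) ≃L[ℝ] (Fin d → ℝ)) (ε : Fin d → ℝ)
    (hε : ∀ i, ε i = 1 ∨ ε i = -1) (hT : ∀ x y, Sb S x y = ∑ i, ε i * (T x i * T y i))
    (ν : Measure (Fin d → ℝ)) [IsProbabilityMeasure ν] (hν : Integrable (fun y => ‖y‖ ^ 2) ν) :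
    ∃ γ, MGamma ν γ ∧ ∀ δ > 0, ∃ (φ : (Fin d → ℝ) → ℝ) (G : Set (Fin d → ℝ)),
      Integrable φ ν ∧ SMono S G ∧ (∀ a : Fin d → ℝ, ∃ x ∈ G, ∀ i, ε i = 1 → T x i = a i) ∧
      (∀ x ∈ G, ∀ y, ell S x y ≤ φ y) ∧
      ∫ y, φ y ∂ν ≤ relaxedVal S (γ.map Prod.fst) + δ := by
  have hf₀ : (fun p : (Fin d → ℝ) × (Fin d → ℝ) => ell S p.1 p.2) ∈ growthSpace (rr (d := d)) := by
    obtain ⟨C, hC, h⟩ := exists_Sb_bound S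
    refine ⟨continuous_ell, 2 * C, by positivity, fun p => ?_⟩
    have h1 := h p.1 p.2
    have h2 := h p.1 p.1
    have h3 := abs_sub (Sb S p.1 p.2) (Sb S p.1 p.1 / 2)
    rw [abs_div, abs_of_pos (two_pos : (0 : ℝ) < 2)] at h3
    have h4 := norm_sq_le_sqn p.1
    have h5 := norm_sq_le_sqn p.2
    have h6 : C * ‖p.1‖ * ‖p.2‖ + C * ‖p.1‖ * ‖p.1‖ / 2
        ≤ 2 * C * (1 + (‖p.1‖ ^ 2 + ‖p.2‖ ^ 2)) := by
      nlinarith [mul_nonneg hC (sq_nonneg (‖p.1‖ - ‖p.2‖)), mul_nonneg hC (sq_nonneg ‖p.1‖),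
        mul_nonneg hC (sq_nonneg ‖p.2‖)]
    have h7 : 2 * C * (1 + (‖p.1‖ ^ 2 + ‖p.2‖ ^ 2)) ≤ 2 * C * (1 + rr p) := by
      unfold rr; gcongr
    have h8 : |ell S p.1 p.2| ≤ |Sb S p.1 p.2| + |Sb S p.1 p.1| / 2 := h3
    linarith
  obtain ⟨γ, hγ, hcert⟩ := exists_plan ν hν ⟨_, hf₀⟩
  refine ⟨γ, hγ, fun δ hδ => ?_⟩
  obtain ⟨φ, v, hφ, hle, hval⟩ := hcert δ hδ
  simp only at hle hval
  rw [integral_ell_of_MGamma hγ] at hval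
  have hle' : ∀ y x, ell S x y - v x ⬝ᵥ (y - x) ≤ φ y := fun y x => by
    have := hle x y; linarith
  have hbdd : ∀ y, BddAbove (range fun x => ell S x y - v x ⬝ᵥ (y - x)) := fun y =>
    ⟨φ y, by rintro _ ⟨x, rfl⟩; exact hle' y x⟩
  have hconv : ConvexOn ℝ univ fun y => ⨆ x, (ell S x y - v x ⬝ᵥ (y - x)) := by
    refine ⟨convex_univ, fun y _ z _ a b ha hb hab => ciSup_le fun x => ?_⟩
    have h1 := le_ciSup (hbdd y) x
    have h2 := le_ciSup (hbdd z) x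
    have h3 : v x ⬝ᵥ (a • y + b • z - x) = a * (v x ⬝ᵥ (y - x)) + b * (v x ⬝ᵥ (z - x)) := by
      obtain rfl : b = 1 - a := by linarith
      simp only [dotProduct_sub, dotProduct_add, dotProduct_smul, smul_eq_mul]
      ring
    rw [ell_comb x y z a b hab, h3]
    simp only [smul_eq_mul] at h1 h2 ⊢
    nlinarith [mul_le_mul_of_nonneg_left h1 ha, mul_le_mul_of_nonneg_left h2 hb]
  have hq : qf S ≤ fun y => ⨆ x, (ell S x y - v x ⬝ᵥ (y - x)) := by
    intro y
    refine le_trans (le_of_eq ?_) (le_ciSup (hbdd y) y)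
    simp only [sub_self, dotProduct_zero, sub_zero, ell, qf]
    ring
  obtain ⟨G, hG, hfib, hGle⟩ := exists_mono_le hS T ε hε hT _ hconv hq
  exact ⟨φ, G, hφ, hG, hfib, fun x hx y => (hGle x hx y).trans (ciSup_le (hle' y)), hval⟩

/-- In the coordinates `T`, an upper bound on `-q(z)` and bounds on the positive coordinates
of `z` bound all its coordinates. -/
lemma coord_sq_le {T : (Fin d → ℝ) ≃L[ℝ] (Fin d → ℝ)} {ε : Fin d → ℝ}
    (hε : ∀ i, ε i = 1 ∨ ε i = -1) (hT : ∀ x y, Sb S x y = ∑ i, ε i * (T x i * T y i))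
    {z b : Fin d → ℝ} {K : ℝ} (hK : 0 ≤ K) (hz : -K ≤ 2 * qf S z)
    (hb : ∀ i, ε i = 1 → T z i = b i) (i : Fin d) :
    T z i ^ 2 ≤ K + ∑ j, b j ^ 2 := by
  have h1 : 2 * qf S z = ∑ j, ε j * (T z j * T z j) := by rw [← hT, qf]; ring
  rw [h1] at hz
  have hbi : b i ^ 2 ≤ ∑ j, b j ^ 2 :=
    Finset.single_le_sum (f := fun j => b j ^ 2) (fun j _ => sq_nonneg _) (Finset.mem_univ i)
  rcases hε i with hi | hi
  · rw [hb i hi]; linarith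
  · have h2 : ∑ j, ε j * (T z j * T z j)
        ≤ ∑ j, (b j ^ 2 - if j = i then T z i ^ 2 else 0) := by
      refine Finset.sum_le_sum fun j _ => ?_
      split_ifs with hji
      · subst hji; rw [hi]; nlinarith [sq_nonneg (b j)]
      · rcases hε j with hj | hj
        · rw [hj, hb j hj]; nlinarith
        · rw [hj]; nlinarith [sq_nonneg (b j), sq_nonneg (T z j)]
    rw [Finset.sum_sub_distrib] at h2
    simp only [Finset.sum_ite_eq', Finset.mem_univ, if_true] at h2
    linarith

/-- Closing up a monotone family which meets the fibres over a dense sequence of points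
gives a maximal monotone set. -/
lemma maxSMono_closure
    (T : (Fin d → ℝ) ≃L[ℝ] (Fin d → ℝ)) (ε : Fin d → ℝ)
    (hε : ∀ i, ε i = 1 ∨ ε i = -1) (hT : ∀ x y, Sb S x y = ∑ i, ε i * (T x i * T y i))
    (a x : ℕ → Fin d → ℝ) (ha : DenseRange a)
    (hx : ∀ k l, 0 ≤ Sb S (x k - x l) (x k - x l))
    (hfib : ∀ k i, ε i = 1 → T (x k) i = a k i) : MaxSMono S (closure (range x)) := by
  refine maxSMono_of_fibre T ε hε hT _ (fun y hy z hz => ?_) fun b => ?_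
  · have hcont : Continuous (Function.uncurry fun y z : Fin d → ℝ => Sb S (y - z) (y - z)) :=
      (continuous_Sb (S := S)).comp ((continuous_fst.sub continuous_snd).prodMk
        (continuous_fst.sub continuous_snd))
    have h := map_mem_closure₂ (u := Ici (0 : ℝ)) hcont hy hz (by
      rintro _ ⟨k, rfl⟩ _ ⟨l, rfl⟩; exact hx k l)
    rwa [isClosed_Ici.closure_eq] at h
  obtain ⟨w, hw, hwb⟩ := mem_closure_iff_seq_limit.1 (ha b)
  choose k hk using hw
  have hlip : ∀ n l, dist (T (x (k n))) (T (x (k l))) ≤ Real.sqrt d * dist (w n) (w l) := by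
    intro n l
    refine (dist_pi_le_iff (by positivity)).2 fun i => ?_
    have h := coord_sq_le hε hT (z := x (k n) - x (k l)) (b := a (k n) - a (k l)) le_rfl
      (by have := hx (k n) (k l); rw [qf]; linarith)
      (fun i hi => by rw [map_sub, Pi.sub_apply, hfib _ i hi, hfib _ i hi, Pi.sub_apply]) i
    rw [hk, hk, zero_add, map_sub, Pi.sub_apply] at h
    have h2 : ∑ j, (w n - w l) j ^ 2 ≤ d * dist (w n) (w l) ^ 2 := by
      calc ∑ j, (w n - w l) j ^ 2 ≤ ∑ _j : Fin d, dist (w n) (w l) ^ 2 := by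
            refine Finset.sum_le_sum fun j _ => ?_
            rw [← sq_abs]
            gcongr
            exact dist_le_pi_dist (w n) (w l) j
        _ = _ := by simp
    rw [Real.dist_eq]
    refine abs_le_of_sq_le_sq ?_ (by positivity)
    rw [mul_pow, Real.sq_sqrt (Nat.cast_nonneg d)]
    linarith
  have hC : CauchySeq fun n => T (x (k n)) := by
    rw [Metric.cauchySeq_iff']
    intro η hη
    obtain ⟨N, hN⟩ := Metric.cauchySeq_iff'.1 hwb.cauchySeq (η / (Real.sqrt d + 1))
      (by positivity)
    refine ⟨N, fun n hn => (hlip n N).trans_lt ?_⟩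
    have h1 := hN n hn
    rw [lt_div_iff₀ (by positivity)] at h1
    nlinarith [dist_nonneg (x := w n) (y := w N)]
  obtain ⟨c, hc⟩ := cauchySeq_tendsto_of_complete hC
  refine ⟨T.symm c, mem_closure_of_tendsto (f := fun n => x (k n)) (b := atTop) ?_
    (Eventually.of_forall fun n => mem_range_self _), fun i hi => ?_⟩
  · have h := (T.symm.continuous.tendsto c).comp hc
    refine h.congr fun n => ?_
    simp
  · rw [T.apply_symm_apply]
    refine tendsto_nhds_unique (f := fun n => T (x (k n)) i) (l := atTop)
      ((continuous_apply i).tendsto c |>.comp hc) ?_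
    have h := (continuous_apply i).tendsto b |>.comp hwb
    refine h.congr fun n => ?_
    rw [hfib _ i hi, hk]
    rfl

set_option maxHeartbeats 1000000 in
/-- A limit of almost optimal monotone sets is optimal. Pick points of the sets over a dense
sequence `a` of positive coordinates; for each `a k` they remain bounded, so a subsequence
converges for all `k` at once, and the closure of the limit points is maximal. -/
lemma exists_limit_set (hS : S.IsHermitian)
    (T : (Fin d → ℝ) ≃L[ℝ] (Fin d → ℝ)) (ε : Fin d → ℝ)
    (hε : ∀ i, ε i = 1 ∨ ε i = -1) (hT : ∀ x y, Sb S x y = ∑ i, ε i * (T x i * T y i))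
    {ν : Measure (Fin d → ℝ)} [IsProbabilityMeasure ν] (hν : Integrable (fun y => ‖y‖ ^ 2) ν)
    (R : ℝ) (φ : ℕ → (Fin d → ℝ) → ℝ) (G : ℕ → Set (Fin d → ℝ))
    (hφ : ∀ n, Integrable (φ n) ν) (hG : ∀ n, SMono S (G n))
    (hfib : ∀ n, ∀ a : Fin d → ℝ, ∃ x ∈ G n, ∀ i, ε i = 1 → T x i = a i)
    (hle : ∀ n, ∀ x ∈ G n, ∀ y, ell S x y ≤ φ n y)
    (hval : ∀ n : ℕ, ∫ y, φ n y ∂ν ≤ R + 1 / ((n : ℝ) + 1)) :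
    ∃ H, MaxSMono S H ∧ eInt ν (fitz S H) ≤ (R : ℝ) := by
  set a : ℕ → Fin d → ℝ := TopologicalSpace.denseSeq (Fin d → ℝ)
  choose x hxG hxa using fun n k => hfib n (a k)
  set m : Fin d → ℝ := ∫ y, y ∂ν with hm
  -- integrating `ℓ_x ≤ φ n` bounds `ℓ_x` at the mean `m` of `ν`
  have hell : ∀ n k, ell S (x n k) m ≤ R + 1 / ((n : ℝ) + 1) := fun n k => by
    rw [hm, ← integral_ell_mean hν]
    exact (integral_mono (integrable_ell hν _) (hφ n) (hle n _ (hxG n k))).trans (hval n)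
  -- for fixed `k`, the points `x n k` stay in a ball independent of `n`
  set K : ℝ := 2 * |R + 1 - qf S m|
  set ρ : ℕ → ℝ := fun k => Real.sqrt (K + ∑ j, (a k - T m) j ^ 2)
  have hball : ∀ n k, T (x n k) ∈ Metric.closedBall (T m) (ρ k) := by
    intro n k
    rw [Metric.mem_closedBall]
    refine (dist_pi_le_iff (Real.sqrt_nonneg _)).2 fun i => ?_
    have h1 := hell n k
    rw [ell_eq hS, ← neg_sub (x n k) m, qf_neg] at h1
    have h2 : 1 / ((n : ℝ) + 1) ≤ 1 := by
      rw [div_le_one (by positivity)]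
      linarith [(Nat.cast_nonneg n : (0 : ℝ) ≤ n)]
    have h := coord_sq_le hε hT (z := x n k - m) (b := a k - T m) (K := K) (by positivity)
      (by have := le_abs_self (R + 1 - qf S m); linarith)
      (fun i hi => by rw [map_sub, Pi.sub_apply, hxa n k i hi, Pi.sub_apply]) i
    rw [map_sub, Pi.sub_apply] at h
    rw [Real.dist_eq]
    exact Real.abs_le_sqrt h
  obtain ⟨w, -, σ, hσ, hw⟩ := (isCompact_univ_pi fun k =>
    isCompact_closedBall (T m) (ρ k)).tendsto_subseq (x := fun n k => T (x n k)) fun n => mem_univ_pi.2 fun k => hball n k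
  -- along `σ`, all the points selected over the dense sequence converge
  have hlim : ∀ k, Tendsto (fun j => x (σ j) k) atTop (𝓝 (T.symm (w k))) := fun k => by
    have h := (T.symm.continuous.tendsto (w k)).comp (tendsto_pi_nhds.1 hw k)
    refine h.congr fun n => ?_
    simp
  set u : ℕ → Fin d → ℝ := fun k => T.symm (w k) with hu
  have hH : MaxSMono S (closure (range u)) := by
    refine maxSMono_closure T ε hε hT a u (TopologicalSpace.denseRange_denseSeq _)
      (fun k l => ?_) fun k i hi => ?_
    · have h := ((continuous_Sb (S := S)).tendsto (u k - u l, u k - u l)).comp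
        (((hlim k).sub (hlim l)).prodMk_nhds ((hlim k).sub (hlim l)))
      exact ge_of_tendsto' h fun j => hG _ _ (hxG _ k) _ (hxG _ l)
    · have h := ((continuous_apply i).tendsto (T (u k))).comp
        ((T.continuous.tendsto _).comp (hlim k))
      refine tendsto_nhds_unique h (tendsto_const_nhds.congr fun j => ?_)
      exact (hxa (σ j) k i hi).symm
  refine ⟨_, hH, ?_⟩
  have hu0 : u 0 ∈ closure (range u) := subset_closure (mem_range_self 0)
  have hell_lim : ∀ k y, Tendsto (fun j => ell S (x (σ j) k) y) atTop (𝓝 (ell S (u k) y)) :=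
    fun k y => ((continuous_ell (S := S)).tendsto (u k, y)).comp
      ((hlim k).prodMk_nhds tendsto_const_nhds)
  have hpt : ∀ y, epos (fitz S (closure (range u)) y - (ell S (u 0) y : ℝ))
      ≤ liminf (fun j => ENNReal.ofReal (φ (σ j) y - ell S (x (σ j) 0) y)) atTop := by
    intro y
    set L := liminf (fun j => ENNReal.ofReal (φ (σ j) y - ell S (x (σ j) 0) y)) atTop
    by_cases hL : L = ⊤
    · rw [hL]; exact le_top
    have h1 : ∀ z ∈ closure (range u), ell S z y ≤ L.toReal + ell S (u 0) y := by
      have hcl : IsClosed {z | ell S z y ≤ L.toReal + ell S (u 0) y} :=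
        isClosed_le (continuous_ell.comp (continuous_id.prodMk continuous_const))
          continuous_const
      refine fun z hz => (hcl.closure_subset_iff.2 ?_) hz
      rintro _ ⟨k, rfl⟩
      have h2 : ENNReal.ofReal (ell S (u k) y - ell S (u 0) y) ≤ L := by
        have h3 : Tendsto (fun j => ENNReal.ofReal (ell S (x (σ j) k) y - ell S (x (σ j) 0) y))
            atTop (𝓝 (ENNReal.ofReal (ell S (u k) y - ell S (u 0) y))) :=
          ENNReal.tendsto_ofReal ((hell_lim k y).sub (hell_lim 0 y))
        rw [← h3.liminf_eq]
        refine liminf_le_liminf (Eventually.of_forall fun j => ENNReal.ofReal_le_ofReal ?_)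
        exact sub_le_sub_right (hle _ _ (hxG _ k) y) _
      have h3 := (ENNReal.ofReal_le_iff_le_toReal hL).1 h2
      change ell S (u k) y ≤ L.toReal + ell S (u 0) y
      linarith
    have h2 : fitz S (closure (range u)) y ≤ ((L.toReal + ell S (u 0) y : ℝ) : EReal) :=
      fitz_le_iff.2 fun z hz => EReal.coe_le_coe_iff.2 (h1 z hz)
    calc epos (fitz S (closure (range u)) y - (ell S (u 0) y : ℝ))
        ≤ epos (((L.toReal + ell S (u 0) y : ℝ) : EReal) - (ell S (u 0) y : ℝ)) :=
          epos_mono (EReal.sub_le_sub h2 le_rfl)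
      _ = L := by
          rw [← EReal.coe_sub, epos_coe, add_sub_cancel_right, ENNReal.ofReal_toReal hL]
  have hle0 : ∀ j, 0 ≤ ∫ y, (φ (σ j) y - ell S (x (σ j) 0) y) ∂ν := fun j =>
    integral_nonneg fun y => sub_nonneg.2 (hle _ _ (hxG _ 0) y)
  have hval' : ∀ j, ∫ y, (φ (σ j) y - ell S (x (σ j) 0) y) ∂ν
      ≤ R + 1 / ((σ j : ℝ) + 1) - ell S (x (σ j) 0) m := fun j => by
    rw [integral_sub (hφ _) (integrable_ell hν _), integral_ell_mean hν]
    exact sub_le_sub_right (hval _) _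
  have hR : Tendsto (fun j => R + 1 / ((σ j : ℝ) + 1) - ell S (x (σ j) 0) m) atTop
      (𝓝 (R - ell S (u 0) m)) := by
    have h := tendsto_one_div_add_atTop_nhds_zero_nat (𝕜 := ℝ).comp hσ.tendsto_atTop
    have h2 := (tendsto_const_nhds (x := R)).add h |>.sub (hell_lim 0 m)
    rwa [add_zero] at h2
  have hR0 : 0 ≤ R - ell S (u 0) m := ge_of_tendsto' hR fun j => (hle0 j).trans (hval' j)
  -- Fatou's lemma, applied to the nonnegative functions `φ (σ j) - ℓ_{x (σ j) 0}`
  have hfatou : ∫⁻ y, epos (fitz S (closure (range u)) y - (ell S (u 0) y : ℝ)) ∂ν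
      ≤ ENNReal.ofReal (R - ell S (u 0) m) := by
    calc ∫⁻ y, epos (fitz S (closure (range u)) y - (ell S (u 0) y : ℝ)) ∂ν
        ≤ ∫⁻ y, liminf (fun j => ENNReal.ofReal (φ (σ j) y - ell S (x (σ j) 0) y)) atTop ∂ν :=
          lintegral_mono hpt
      _ ≤ liminf (fun j => ∫⁻ y, ENNReal.ofReal (φ (σ j) y - ell S (x (σ j) 0) y) ∂ν) atTop :=
          lintegral_liminf_le' fun j =>
            ((hφ _).sub (integrable_ell hν _)).aemeasurable.ennreal_ofReal
      _ ≤ liminf (fun j => ENNReal.ofReal (R + 1 / ((σ j : ℝ) + 1) - ell S (x (σ j) 0) m))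
          atTop := by
          refine liminf_le_liminf (Eventually.of_forall fun j => ?_)
          rw [← ofReal_integral_eq_lintegral_ofReal
            (f := fun y => φ (σ j) y - ell S (x (σ j) 0) y) ((hφ _).sub (integrable_ell hν _))
            (Eventually.of_forall fun y => sub_nonneg.2 (hle _ _ (hxG _ 0) y))]
          exact ENNReal.ofReal_le_ofReal (hval' j)
      _ = ENNReal.ofReal (R - ell S (u 0) m) := (ENNReal.tendsto_ofReal hR).liminf_eq
  rw [eInt_eq_add (measurable_fitz hH.nonempty) (integrable_ell hν (u 0)) (ell_le_fitz hu0),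
    integral_ell_mean hν]
  calc _ ≤ ((ENNReal.ofReal (R - ell S (u 0) m) : ENNReal) : EReal)
        + ((ell S (u 0) m : ℝ) : EReal) :=
        add_le_add_left (EReal.coe_ennreal_le_coe_ennreal_iff.2 hfatou) _
    _ = (R : ℝ) := by
        rw [EReal.coe_ennreal_ofReal, max_eq_left hR0, ← EReal.coe_add, sub_add_cancel]

/-- Strong duality: a martingale coupling and a maximal monotone set with matching values. -/
lemma strong_duality (hS : S.IsHermitian) (hrank : IsUnit S.det)
    (ν : Measure (Fin d → ℝ)) [IsProbabilityMeasure ν] (hν : Integrable (fun y => ‖y‖ ^ 2) ν) :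
    ∃ γ H, MGamma ν γ ∧ MaxSMono S H ∧
      eInt ν (fitz S H) ≤ ((relaxedVal S (γ.map Prod.fst) : ℝ) : EReal) := by
  obtain ⟨T, ε, hε, hT⟩ := exists_diag hS hrank
  obtain ⟨γ, hγ, h⟩ := exists_plan_mono hS T ε hε hT ν hν
  choose φ G h1 h2 h3 h4 h5 using fun n : ℕ => h (1 / ((n : ℝ) + 1)) (by positivity)
  obtain ⟨H, hH, hval⟩ := exists_limit_set hS T ε hε hT hν _ φ G h1 h2 h3 h4 h5
  exact ⟨γ, H, hγ, hH, hval⟩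

end DualAttainment

/-- Theorem 3: the problem of maximizing `½∫S(x,x) dμ` over `μ ≺_conv ν`
has a solution; moreover, for `μ ≺_conv ν`, `G` maximal `S`-monotone and `γ ∈ Γ(ν)` with
`x`-marginal `μ`: (i) `μ` is optimal iff `γ` is an optimal plan for the primal problem;
(ii) `μ` is optimal and `G` dual-optimal iff `∫ψ_G dν = ½∫S(x,x) dμ`, in which case
`supp μ ⊆ G`. -/
theorem relaxed_problem_and_duality
    (d m : ℕ) (S : Matrix (Fin d) (Fin d) ℝ) (hS : S.IsHermitian)
    (hrank : IsUnit S.det)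
    (hm : Nat.card {i : Fin d // 0 < hS.eigenvalues i} = m)
    (ν : Measure (Fin d → ℝ)) [IsProbabilityMeasure ν]
    (hν : Integrable (fun y => ‖y‖ ^ 2) ν) :
    (∃ μ, RelaxedOpt S ν μ) ∧
      ∀ (μ : Measure (Fin d → ℝ)) (G : Set (Fin d → ℝ))
        (γ : Measure ((Fin d → ℝ) × (Fin d → ℝ))),
        ConvFeasible ν μ → MaxSMono S G → MGamma ν γ → γ.map Prod.fst = μ →
          ((RelaxedOpt S ν μ ↔ PrimalOpt S ν γ) ∧
           ((RelaxedOpt S ν μ ∧ DualOpt S ν G) ↔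
              eInt ν (fitz S G) = ((relaxedVal S μ : ℝ) : EReal)) ∧
           (eInt ν (fitz S G) = ((relaxedVal S μ : ℝ) : EReal) → msupp μ ⊆ G)) := by
  obtain ⟨γ₀, H, hγ₀, hH, hval⟩ := strong_duality hS hrank ν hν
  have hμ₀ := convFeasible_of_MGamma hγ₀
  have hweak : ∀ μ, ConvFeasible ν μ → ∀ G, MaxSMono S G →
      ((relaxedVal S μ : ℝ) : EReal) ≤ eInt ν (fitz S G) :=
    fun μ hμ G hG => (weak_duality hS hν hμ hG).1
  have hopt : RelaxedOpt S ν (γ₀.map Prod.fst) :=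
    ⟨hμ₀, fun μ hμ => EReal.coe_le_coe_iff.1 ((hweak μ hμ H hH).trans hval)⟩
  refine ⟨⟨_, hopt⟩, ?_⟩
  rintro μ G γ hμ hG hγ rfl
  refine ⟨⟨fun h => ⟨hγ, fun γ' hγ' => ?_⟩, fun h => ⟨hμ, fun μ' hμ' => ?_⟩⟩,
    ⟨fun h => le_antisymm ?_ (hweak _ hμ G hG), fun h => ⟨⟨hμ, fun μ' hμ' => ?_⟩, hG,
      fun G' hG' => ?_⟩⟩, (weak_duality hS hν hμ hG).2⟩
  · rw [primalVal_eq hγ, primalVal_eq hγ']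
    exact h.2 _ (convFeasible_of_MGamma hγ')
  · have h1 := h.2 _ hγ₀
    rw [primalVal_eq hγ, primalVal_eq hγ₀] at h1
    exact (hopt.2 μ' hμ').trans h1
  · exact (h.2.2 H hH).trans (hval.trans (EReal.coe_le_coe_iff.2 (h.1.2 _ hμ₀)))
  · exact EReal.coe_le_coe_iff.1 ((hweak μ' hμ' G hG).trans h.le)
  · exact h.le.trans (hweak _ hμ G' hG')

end
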